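/- Let g be a smooth Riemannian metric on an open set Ω ⊆ ℝ² containing a point p. Then there exist an open neighborhood U of p with U ⊆ Ω and an injective smooth map u : U → ℝ⁴ with (∇u(x))ᵀ ∇u(x) = g(x) for all x ∈ U; that is, every smooth 2-dimensional metric admits a smooth local isometric embedding in ℝ⁴. (Poznyak, 1973.) -/

import Mathlib

noncomputable section
open Matrix Set

attribute [local instance] Matrix.normedAddCommGroup Matrix.normedSpace

abbrev E2 := EuclideanSpace ℝ (Fin 2)

/-- The Jacobian matrix (4×2) of a map `u : ℝ² → ℝ⁴` at a point `x`. -/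
def Jac (u : E2 → EuclideanSpace ℝ (Fin 4)) (x : E2) : Matrix (Fin 4) (Fin 2) ℝ :=
  Matrix.of fun i j => fderiv ℝ u x (EuclideanSpace.single j 1) i

/-!
Subtract from `g` the square of the differential of `f z = (t / 2) ‖z - p‖²`. Since `f` is critical
at `p`, this leaves `g p` unchanged and lowers the curvature there by a multiple of `t²`, so for
large `t` the remaining metric is negatively curved near `p`. A smooth negatively curved metric
embeds locally in `ℝ³`: in asymptotic coordinates the Gauss equation holds identically and the
Codazzi equation becomes a semilinear wave equation for the coordinates themselves, which is a
Goursat problem, solvable by the inverse function theorem; the surface is then recovered from its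
fundamental forms by the Frobenius theorem. Adding `f` as a fourth coordinate restores `g`.
-/

open Filter Topology MeasureTheory
open scoped ContDiff unitInterval InnerProductSpace

/-! ### Smooth superposition operators on spaces of continuous functions -/

section Superposition

universe u v

variable {K : Type*} [TopologicalSpace K] [CompactSpace K]

/-- Pointwise application of operator-valued functions, as a continuous bilinear map: the
derivative of a superposition operator `W ↦ f ∘ W` at `W` is `applyCLM K E F (f' ∘ W)`. -/
def applyCLM (K E F : Type*) [TopologicalSpace K] [CompactSpace K] [NormedAddCommGroup E]
    [NormedSpace ℝ E] [NormedAddCommGroup F] [NormedSpace ℝ F] :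
    C(K, E →L[ℝ] F) →L[ℝ] C(K, E) →L[ℝ] C(K, F) :=
  LinearMap.mkContinuous₂
    (LinearMap.mk₂ ℝ
      (fun (A : C(K, E →L[ℝ] F)) (h : C(K, E)) => (⟨fun x => A x (h x), by fun_prop⟩ : C(K, F)))
      (fun A B h => by ext x; simp) (fun c A h => by ext x; simp)
      (fun A h k => by ext x; simp) (fun c A h => by ext x; simp)) 1 (by
    intro A h
    rw [ContinuousMap.norm_le _ (by positivity), one_mul]
    exact fun x => (A x).le_of_opNorm_le_of_le (A.norm_coe_le_norm x) (h.norm_coe_le_norm x))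

theorem hasFDerivAt_superposition {E F : Type*} [NormedAddCommGroup E] [NormedSpace ℝ E]
    [NormedAddCommGroup F] [NormedSpace ℝ F] (f : C(E, F)) (f' : C(E, E →L[ℝ] F))
    (hf : ∀ x, HasFDerivAt f (f' x) x) (W : C(K, E)) :
    HasFDerivAt (fun W : C(K, E) => f.comp W) (applyCLM K E F (f'.comp W)) W := by
  rw [hasFDerivAt_iff_isLittleO_nhds_zero, Asymptotics.isLittleO_iff]
  intro ε hε
  have hcont : Continuous fun W : C(K, E) => f'.comp W := ContinuousMap.continuous_postcomp f'
  obtain ⟨δ, hδ, hW⟩ :=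
    (Metric.continuousAt_iff (f := fun W : C(K, E) => f'.comp W)).1 hcont.continuousAt ε hε
  filter_upwards [Metric.ball_mem_nhds (0 : C(K, E)) hδ] with h hh
  rw [mem_ball_zero_iff] at hh
  rw [ContinuousMap.norm_le _ (by positivity)]
  intro x
  have hf'_near : ∀ y ∈ Metric.ball (W x) δ, ‖f' y - f' (W x)‖ ≤ ε := fun y hy => by
    have hshift : dist (W + ContinuousMap.const K (y - W x)) W < δ := by
      rw [dist_eq_norm, add_sub_cancel_left]
      refine lt_of_le_of_lt ((ContinuousMap.norm_le _ (norm_nonneg (y - W x))).2 fun _ => le_rfl)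
        (mem_ball_iff_norm.1 hy)
    simpa [dist_eq_norm] using (ContinuousMap.dist_apply_le_dist x).trans (hW hshift).le
  have hmvt := (convex_ball (W x) δ).norm_image_sub_le_of_norm_hasFDerivWithin_le'
    (fun y _ => (hf y).hasFDerivWithinAt) hf'_near (Metric.mem_ball_self hδ)
    (y := W x + h x) (by
      rw [mem_ball_iff_norm, add_sub_cancel_left]
      exact (h.norm_coe_le_norm x).trans_lt hh)
  rw [add_sub_cancel_left] at hmvt
  exact hmvt.trans (mul_le_mul_of_nonneg_left (h.norm_coe_le_norm x) hε.le)

theorem contDiff_superposition_of_same_universe {E F : Type u} [NormedAddCommGroup E]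
    [NormedSpace ℝ E] [NormedAddCommGroup F] [NormedSpace ℝ F] (f : C(E, F))
    (hf : ContDiff ℝ ∞ f) : ContDiff ℝ ∞ fun W : C(K, E) => f.comp W := by
  rw [contDiff_infty]
  intro n
  induction n generalizing F with
  | zero => exact contDiff_zero.2 (ContinuousMap.continuous_postcomp f)
  | succ n ih =>
    have hf' : ContDiff ℝ ∞ (fderiv ℝ f) := hf.fderiv_right (by simp)
    let f' : C(E, E →L[ℝ] F) := ⟨fderiv ℝ f, hf'.continuous⟩
    refine contDiff_succ_iff_hasFDerivAt.2
      ⟨fun W => applyCLM K E F (f'.comp W),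
        ContDiff.comp (by apply ContinuousLinearMap.contDiff) (ih f' hf'), ?_⟩
    exact hasFDerivAt_superposition f f' fun x => (hf.differentiable (by simp) x).hasFDerivAt

theorem contDiff_superposition {E : Type u} {F : Type v} [NormedAddCommGroup E]
    [NormedSpace ℝ E] [NormedAddCommGroup F] [NormedSpace ℝ F] (f : C(E, F))
    (hf : ContDiff ℝ ∞ f) : ContDiff ℝ ∞ fun W : C(K, E) => f.comp W := by
  let eE : ULift.{v} E ≃L[ℝ] E := ContinuousLinearEquiv.ulift
  let eF : ULift.{u} F ≃L[ℝ] F := ContinuousLinearEquiv.ulift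
  let f' : C(ULift.{v} E, ULift.{u} F) := ⟨fun x => eF.symm (f (eE x)), by fun_prop⟩
  have hf' : ContDiff ℝ ∞ f' := eF.symm.contDiff.comp (hf.comp eE.contDiff)
  exact ((eF : ULift.{u} F →L[ℝ] F).compLeftContinuous ℝ K).contDiff.comp
    ((contDiff_superposition_of_same_universe f' hf').comp
      ((eE.symm : E →L[ℝ] ULift.{v} E).compLeftContinuous ℝ K).contDiff)

end Superposition

/-! ### Local inverses and smooth extension of germs -/

section Germs

variable {E F : Type*} [NormedAddCommGroup E] [NormedSpace ℝ E]
  [NormedAddCommGroup F] [NormedSpace ℝ F]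

theorem exists_smooth_localInverse [CompleteSpace E] {f : E → F} (hf : ContDiff ℝ ∞ f) {a : E}
    {f' : E ≃L[ℝ] F} (hf' : HasFDerivAt f (f' : E →L[ℝ] F) a) :
    ∃ φ : F → E, φ (f a) = a ∧ (∀ᶠ y in 𝓝 (f a), ContDiffAt ℝ ∞ φ y ∧ f (φ y) = y) ∧
      ∀ᶠ x in 𝓝 a, φ (f x) = x := by
  have hat : ContDiffAt ℝ ∞ f a := hf.contDiffAt
  let e := hat.toOpenPartialHomeomorph f hf' (by simp)
  have ha : a ∈ e.source := hat.mem_toOpenPartialHomeomorph_source hf' (by simp)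
  have hfa : f a ∈ e.target := e.map_source ha
  have hsymm : e.symm (f a) = a := e.left_inv ha
  refine ⟨e.symm, hsymm, ?_, e.eventually_left_inverse ha⟩
  have hequiv : ∀ᶠ x in 𝓝 a, fderiv ℝ f x ∈ range ((↑) : (E ≃L[ℝ] F) → E →L[ℝ] F) :=
    (hf.continuous_fderiv (by simp)).continuousAt.eventually
      (ContinuousLinearEquiv.isOpen.mem_nhds (hf'.fderiv ▸ mem_range_self f'))
  have htendsto : Tendsto e.symm (𝓝 (f a)) (𝓝 a) := by
    simpa only [ContinuousAt, hsymm] using e.symm.continuousAt hfa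
  filter_upwards [e.open_target.mem_nhds hfa, htendsto.eventually hequiv] with y hy ⟨g', hg'⟩
  refine ⟨e.contDiffAt_symm hy (f₀' := g') ?_ hf.contDiffAt, e.right_inv hy⟩
  rw [hg']
  exact (hf.differentiable (by simp) _).hasFDerivAt

theorem exists_contDiff_eventuallyEq [HasContDiffBump E] {f : E → F} {x : E}
    (hf : ∀ᶠ y in 𝓝 x, ContDiffAt ℝ ∞ f y) : ∃ φ : E → F, ContDiff ℝ ∞ φ ∧ φ =ᶠ[𝓝 x] f := by
  obtain ⟨r, hr, hball⟩ := Metric.eventually_nhds_iff_ball.1 hf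
  let χ : ContDiffBump x := ⟨r / 3, r / 2, by positivity, by linarith⟩
  refine ⟨fun y => χ y • f y, contDiff_iff_contDiffAt.2 fun y => ?_, ?_⟩
  · by_cases hy : y ∈ Metric.ball x r
    · exact χ.contDiff.contDiffAt.smul (hball y hy)
    · have hsupp : y ∉ tsupport χ := by
        rw [χ.tsupport_eq, Metric.mem_closedBall]
        rw [Metric.mem_ball] at hy
        change ¬ dist y x ≤ r / 2
        linarith
      refine contDiffAt_const (c := 0).congr_of_eventuallyEq ?_
      filter_upwards [notMem_tsupport_iff_eventuallyEq.1 hsupp] with z hz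
      simp [hz]
  · filter_upwards [χ.eventuallyEq_one] with y hy
    simp [hy]

end Germs

/-! ### Hyperbolic systems in two characteristic variables -/

section FixedPoint

variable {P Y : Type*} [NormedAddCommGroup P] [NormedSpace ℝ P] [NormedAddCommGroup Y]
  [NormedSpace ℝ Y]

theorem exists_hasFDerivAt_equiv_of_forall_eq {R : P × Y → Y} {y₀ : Y}
    (hR : DifferentiableAt ℝ R (0, y₀)) (h0 : ∀ y, R (0, y) = y₀) :
    ∃ Ψ' : (P × Y) ≃L[ℝ] P × Y,
      HasFDerivAt (fun w => (w.1, w.2 - R w)) (Ψ' : (P × Y) →L[ℝ] P × Y) (0, y₀) := by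
  set R' := fderiv ℝ R (0, y₀)
  have hR' : HasFDerivAt R R' (0, y₀) := hR.hasFDerivAt
  have hvert : ∀ y, R' (0, y) = 0 := by
    have hslice : HasFDerivAt (fun y => R (0, y)) (R' ∘L ContinuousLinearMap.inr ℝ P Y) y₀ :=
      HasFDerivAt.comp y₀ hR' (hasFDerivAt_prodMk_right 0 y₀)
    have hconst : HasFDerivAt (fun y => R (0, y)) (0 : Y →L[ℝ] Y) y₀ := by
      simp only [h0]
      exact hasFDerivAt_const _ _
    intro y
    simpa using DFunLike.congr_fun (hslice.unique hconst) y
  refine ⟨ContinuousLinearEquiv.skewProd (ContinuousLinearEquiv.refl ℝ P)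
    (ContinuousLinearEquiv.refl ℝ Y) (-(R' ∘L ContinuousLinearMap.inl ℝ P Y)), ?_⟩
  have hderiv : HasFDerivAt (fun w : P × Y => (w.1, w.2 - R w))
      ((ContinuousLinearMap.fst ℝ P Y).prod (ContinuousLinearMap.snd ℝ P Y - R')) (0, y₀) :=
    hasFDerivAt_fst.prodMk (hasFDerivAt_snd.sub hR')
  convert hderiv using 1
  ext w <;> simp [hvert]

theorem exists_smooth_fixedPoint [CompleteSpace P] [CompleteSpace Y] {R : P × Y → Y}
    (hR : ContDiff ℝ ∞ R) {y₀ : Y} (h0 : ∀ y, R (0, y) = y₀) :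
    ∃ φ : P → Y, φ 0 = y₀ ∧ (∀ᶠ z in 𝓝 0, ContDiffAt ℝ ∞ φ z ∧ φ z = R (z, φ z)) ∧
      ∀ᶠ w in 𝓝 ((0 : P), y₀), w.2 = R w → w.2 = φ w.1 := by
  let Ψ : P × Y → P × Y := fun w => (w.1, w.2 - R w)
  have hΨ : ContDiff ℝ ∞ Ψ := contDiff_fst.prodMk (contDiff_snd.sub hR)
  obtain ⟨Ψ', hΨ'⟩ := exists_hasFDerivAt_equiv_of_forall_eq (hR.differentiable (by simp) _) h0
  obtain ⟨θ, hθ0, hθ, hθΨ⟩ := exists_smooth_localInverse hΨ hΨ'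
  have hΨ0 : Ψ (0, y₀) = (0, 0) := by simp [Ψ, h0]
  rw [hΨ0] at hθ0 hθ
  have hslice : Continuous fun z : P => (z, (0 : Y)) := by fun_prop
  refine ⟨fun z => (θ (z, 0)).2, by simp [hθ0], ?_, ?_⟩
  · filter_upwards [hslice.continuousAt.eventually hθ] with z ⟨hsmooth, hinv⟩
    have hfst : (θ (z, 0)).1 = z := congrArg Prod.fst hinv
    have hsnd : (θ (z, 0)).2 - R (θ (z, 0)) = 0 := congrArg Prod.snd hinv
    have hpair : θ (z, 0) = (z, (θ (z, 0)).2) := Prod.ext hfst rfl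
    exact ⟨contDiff_snd.contDiffAt.comp z
      (hsmooth.comp z (contDiff_id.prodMk contDiff_const).contDiffAt),
      hpair ▸ sub_eq_zero.1 hsnd⟩
  · filter_upwards [hθΨ] with w hw hfix
    have hΨw : Ψ w = (w.1, 0) := Prod.ext rfl (sub_eq_zero.2 hfix)
    rw [hΨw] at hw
    exact (congrArg Prod.snd hw).symm

end FixedPoint

section IntegralOperators

variable {E : Type*} [NormedAddCommGroup E] [NormedSpace ℝ E]

/-- The operator taking `h` to `x ↦ w x • ∫ τ, h (γ (x, τ))`, the mean of `h` along the path
`τ ↦ γ (x, τ)` weighted by `w x`. For linear paths in the unit square and `w` the length of the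
path it is a primitive of `h`. -/
def weightedPathMean {K : Type*} [TopologicalSpace K] [CompactSpace K]
    [LocallyCompactSpace K] [FirstCountableTopology K] (w : C(K, ℝ)) (γ : C(K × I, K)) :
    C(K, E) →L[ℝ] C(K, E) :=
  have hcont (h : C(K, E)) (x : K) : Continuous fun τ : I => h (γ (x, τ)) := by fun_prop
  have hint (h : C(K, E)) (x : K) : Integrable (fun τ : I => h (γ (x, τ))) volume :=
    integrableOn_univ.1 ((hcont h x).continuousOn.integrableOn_compact isCompact_univ)
  LinearMap.mkContinuous
    { toFun h := ⟨fun x => w x • ∫ τ : I, h (γ (x, τ)), by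
        have hmean := continuous_parametric_integral_of_continuous (μ := (volume : Measure I))
          (f := fun x τ => h (γ (x, τ))) (h.comp γ).continuous isCompact_univ
        simp only [Measure.restrict_univ] at hmean
        fun_prop⟩
      map_add' h k := by
        ext x
        simp only [ContinuousMap.coe_mk, ContinuousMap.add_apply]
        rw [integral_add (hint h x) (hint k x), smul_add]
      map_smul' c h := by
        ext x
        simp only [ContinuousMap.coe_mk, ContinuousMap.smul_apply, RingHom.id_apply]
        rw [integral_smul, smul_comm] } ‖w‖ (fun h => by
    rw [ContinuousMap.norm_le _ (by positivity)]
    intro x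
    have hmean : ‖∫ τ : I, h (γ (x, τ))‖ ≤ ‖h‖ * (volume : Measure I).real univ :=
      norm_integral_le_of_norm_le_const (Eventually.of_forall fun τ => h.norm_coe_le_norm _)
    rw [probReal_univ, mul_one] at hmean
    exact (norm_smul_le _ _).trans
      (mul_le_mul (w.norm_coe_le_norm x) hmean (norm_nonneg _) (norm_nonneg _)))

theorem integral_unitInterval_smul_comp_mul (f : ℝ → E) (b : ℝ) :
    b • ∫ τ : I, f (b * τ) = ∫ x in (0 : ℝ)..b, f x := by
  have hunit : ∫ τ : I, f (b * τ) = ∫ τ in (0 : ℝ)..1, f (b * τ) := by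
    rw [intervalIntegral.integral_of_le zero_le_one, ← integral_Icc_eq_integral_Ioc]
    exact integral_subtype measurableSet_Icc fun τ : ℝ => f (b * τ)
  rw [hunit, intervalIntegral.smul_integral_comp_mul_left, mul_zero, mul_one]

/-- The map of the unit square onto the rectangle with opposite vertices `0` and `z`. -/
def stretch (z : ℝ × ℝ) : C(I × I, ℝ × ℝ) :=
  z.1 • ⟨fun x => ((x.1 : ℝ), 0), by fun_prop⟩ + z.2 • ⟨fun x => (0, (x.2 : ℝ)), by fun_prop⟩

theorem stretch_apply (z : ℝ × ℝ) (x : I × I) : stretch z x = (z.1 * x.1, z.2 * x.2) := by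
  simp [stretch]

theorem contDiff_stretch : ContDiff ℝ ∞ stretch := by
  unfold stretch
  fun_prop

theorem norm_stretch_apply_le (z : ℝ × ℝ) (x : I × I) : ‖stretch z x‖ ≤ ‖z‖ := by
  have hmul (r : ℝ) (t : I) : ‖r * t‖ ≤ ‖r‖ := by
    rw [norm_mul]
    exact mul_le_of_le_one_right (norm_nonneg _)
      ((Real.norm_of_nonneg t.2.1).trans_le t.2.2)
  rw [stretch_apply]
  exact max_le_max (hmul z.1 x.1) (hmul z.2 x.2)

theorem eventually_forall_stretch {p : ℝ × ℝ → Prop} (hp : ∀ᶠ z in 𝓝 0, p z) :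
    ∀ᶠ z in 𝓝 0, ∀ x, p (stretch z x) := by
  obtain ⟨δ, hδ, hball⟩ := Metric.eventually_nhds_iff_ball.1 hp
  filter_upwards [Metric.ball_mem_nhds 0 hδ] with z hz x
  exact hball _ (mem_ball_zero_iff.2
    ((norm_stretch_apply_le z x).trans_lt (mem_ball_zero_iff.1 hz)))

/-- The right hand side of the integral equation
`u z = D z + ∫ b in 0..z.2, F (u (z.1, b)) + ∫ a in 0..z.1, G (u (a, z.2))` on the rectangle
spanned by `z`, transplanted to the unit square: the unknown is `W = u ∘ stretch z`. -/
def goursatOperator (D : C(ℝ × ℝ, E)) (F G : C(E, E)) (w : (ℝ × ℝ) × C(I × I, E)) :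
    C(I × I, E) :=
  D.comp (stretch w.1) +
    w.1.2 • weightedPathMean (K := I × I) ⟨fun x => (x.2 : ℝ), by fun_prop⟩
      ⟨fun x => (x.1.1, x.1.2 * x.2), by fun_prop⟩ (F.comp w.2) +
    w.1.1 • weightedPathMean (K := I × I) ⟨fun x => (x.1 : ℝ), by fun_prop⟩
      ⟨fun x => (x.1.1 * x.2, x.1.2), by fun_prop⟩ (G.comp w.2)

variable (D : C(ℝ × ℝ, E)) (F G : C(E, E))

theorem goursatOperator_apply (z : ℝ × ℝ) (W : C(I × I, E)) (x : I × I) :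
    goursatOperator D F G (z, W) x = D (stretch z x) +
      z.2 • (x.2 : ℝ) • (∫ τ : I, F (W (x.1, x.2 * τ))) +
      z.1 • (x.1 : ℝ) • ∫ τ : I, G (W (x.1 * τ, x.2)) :=
  rfl

theorem goursatOperator_zero (W : C(I × I, E)) :
    goursatOperator D F G (0, W) = ContinuousMap.const _ (D 0) := by
  ext x
  simp [goursatOperator_apply, stretch_apply, ← Prod.zero_eq_mk]

variable {D F G}

theorem contDiff_goursatOperator (hD : ContDiff ℝ ∞ D) (hF : ContDiff ℝ ∞ F)
    (hG : ContDiff ℝ ∞ G) : ContDiff ℝ ∞ (goursatOperator D F G) := by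
  have hDs : ContDiff ℝ ∞ fun w : (ℝ × ℝ) × C(I × I, E) => D.comp (stretch w.1) :=
    (contDiff_superposition D hD).comp (contDiff_stretch.comp contDiff_fst)
  have hFs : ContDiff ℝ ∞ fun w : (ℝ × ℝ) × C(I × I, E) => F.comp w.2 :=
    (contDiff_superposition F hF).comp contDiff_snd
  have hGs : ContDiff ℝ ∞ fun w : (ℝ × ℝ) × C(I × I, E) => G.comp w.2 :=
    (contDiff_superposition G hG).comp contDiff_snd
  unfold goursatOperator
  fun_prop

theorem comp_mul_eq_goursatOperator {z : ℝ × ℝ} {W : C(I × I, E)}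
    (hW : W = goursatOperator D F G (z, W)) (x : I × I) :
    W.comp ⟨(x * ·), by fun_prop⟩ =
      goursatOperator D F G (stretch z x, W.comp ⟨(x * ·), by fun_prop⟩) := by
  ext y
  rw [goursatOperator_apply]
  change W (x * y) = _
  rw [hW, goursatOperator_apply, ← hW]
  simp [stretch_apply, smul_smul, mul_assoc, Prod.mul_def]

theorem exists_smooth_goursatOperator_fixedPoint [CompleteSpace E] (hD : ContDiff ℝ ∞ D)
    (hF : ContDiff ℝ ∞ F) (hG : ContDiff ℝ ∞ G) :
    ∃ u : ℝ × ℝ → E, (∀ᶠ z in 𝓝 0, ContDiffAt ℝ ∞ u z) ∧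
      ∀ᶠ z in 𝓝 0, ∃ W : C(I × I, E),
        W = goursatOperator D F G (z, W) ∧ ∀ x, W x = u (stretch z x) := by
  obtain ⟨φ, hφ0, hφ, huniq⟩ :=
    exists_smooth_fixedPoint (contDiff_goursatOperator hD hF hG) (goursatOperator_zero D F G)
  obtain ⟨ε, hε, huniq⟩ := Metric.eventually_nhds_iff_ball.1 huniq
  have hφε : ∀ᶠ z in 𝓝 0, φ z ∈ Metric.ball (ContinuousMap.const _ (D 0)) ε :=
    (hφ.self_of_nhds).1.continuousAt.eventually
      (hφ0 ▸ Metric.ball_mem_nhds _ hε)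
  refine ⟨fun z => φ z 1, hφ.mono fun z hz =>
    (ContinuousMap.evalCLM ℝ (M := E) (1 : I × I)).contDiff.contDiffAt.comp z hz.1, ?_⟩
  filter_upwards [hφ, hφε, eventually_forall_stretch (Metric.ball_mem_nhds (0 : ℝ × ℝ) hε)]
    with z ⟨_, hfix⟩ hball hstretch
  refine ⟨φ z, hfix, fun x => ?_⟩
  set V := (φ z).comp ⟨(x * ·), by fun_prop⟩ with hV
  have hVball : dist V (ContinuousMap.const _ (D 0)) < ε :=
    lt_of_le_of_lt ((ContinuousMap.dist_le dist_nonneg).2 fun y =>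
      ContinuousMap.dist_apply_le_dist (f := φ z) (g := ContinuousMap.const _ (D 0)) (x * y)) hball
  have hVφ : V = φ (stretch z x) := huniq (stretch z x, V)
    (max_lt (hstretch x) hVball) (comp_mul_eq_goursatOperator hfix x)
  rw [← hVφ, hV]
  exact congrArg (φ z) (mul_one x).symm

theorem exists_smooth_integral_solution [CompleteSpace E] {D : ℝ × ℝ → E} {F G : E → E}
    (hD : ContDiff ℝ ∞ D) (hF : ContDiff ℝ ∞ F) (hG : ContDiff ℝ ∞ G) :
    ∃ u : ℝ × ℝ → E, ContDiff ℝ ∞ u ∧ ∀ᶠ z in 𝓝 0,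
      u z = D z + (∫ b in (0 : ℝ)..z.2, F (u (z.1, b))) + ∫ a in (0 : ℝ)..z.1, G (u (a, z.2)) := by
  obtain ⟨v, hv, hfix⟩ := exists_smooth_goursatOperator_fixedPoint (D := ⟨D, hD.continuous⟩)
    (F := ⟨F, hF.continuous⟩) (G := ⟨G, hG.continuous⟩) hD hF hG
  obtain ⟨u, hu, huv⟩ := exists_contDiff_eventuallyEq hv
  refine ⟨u, hu, ?_⟩
  filter_upwards [hfix, eventually_forall_stretch huv] with z ⟨W, hW, hWv⟩ huv
  have hWu : ∀ x, W x = u (z.1 * x.1, z.2 * x.2) := fun x => by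
    rw [hWv, ← huv, stretch_apply]
  have hcorner : W 1 = goursatOperator _ _ _ (z, W) 1 := congrArg (· 1) hW
  rw [goursatOperator_apply, stretch_apply] at hcorner
  simpa [hWu, integral_unitInterval_smul_comp_mul (fun b => F (u (z.1, b))),
    integral_unitInterval_smul_comp_mul (fun a => G (u (a, z.2)))] using hcorner

end IntegralOperators

section Goursat

variable {M N : Type*} [NormedAddCommGroup M] [NormedSpace ℝ M] [NormedAddCommGroup N]
  [NormedSpace ℝ N]

theorem hasDerivAt_comp_prodMk_left {f : ℝ × ℝ → M} {z : ℝ × ℝ} (hf : DifferentiableAt ℝ f z) :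
    HasDerivAt (fun a => f (a, z.2)) (fderiv ℝ f z (1, 0)) z.1 :=
  hf.hasFDerivAt.comp_hasDerivAt z.1 ((hasDerivAt_id _).prodMk (hasDerivAt_const _ _))

theorem hasDerivAt_comp_prodMk_right {f : ℝ × ℝ → M} {z : ℝ × ℝ} (hf : DifferentiableAt ℝ f z) :
    HasDerivAt (fun b => f (z.1, b)) (fderiv ℝ f z (0, 1)) z.2 :=
  hf.hasFDerivAt.comp_hasDerivAt z.2 ((hasDerivAt_const _ _).prodMk (hasDerivAt_id _))

variable [CompleteSpace M] [CompleteSpace N]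

theorem fderiv_zero_one_eq_of_eq_integral {f h : ℝ × ℝ → M} {f₀ : ℝ → M} (hf : Differentiable ℝ f)
    (hh : Continuous h)
    (hfh : ∀ᶠ z in 𝓝 0, f z = f₀ z.1 + ∫ b in (0 : ℝ)..z.2, h (z.1, b)) :
    (∀ᶠ z in 𝓝 0, fderiv ℝ f z (0, 1) = h z) ∧ ∀ᶠ a in 𝓝 0, f (a, 0) = f₀ a := by
  constructor
  · filter_upwards [hfh.eventually_nhds] with z hz
    refine (hasDerivAt_comp_prodMk_right (hf z)).unique (HasDerivAt.congr_of_eventuallyEq ?_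
      ((Continuous.prodMk_right z.1).continuousAt.eventually hz))
    have hcont : Continuous fun b => h (z.1, b) := hh.comp (Continuous.prodMk_right z.1)
    exact (hcont.integral_hasStrictDerivAt 0 z.2).hasDerivAt.const_add (f₀ z.1)
  · have hcont : ContinuousAt (fun a : ℝ => (a, (0 : ℝ))) 0 := by fun_prop
    filter_upwards [hcont.eventually hfh] with a ha
    simpa using ha

theorem fderiv_one_zero_eq_of_eq_integral {f h : ℝ × ℝ → M} {f₀ : ℝ → M} (hf : Differentiable ℝ f)
    (hh : Continuous h)
    (hfh : ∀ᶠ z in 𝓝 0, f z = f₀ z.2 + ∫ a in (0 : ℝ)..z.1, h (a, z.2)) :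
    (∀ᶠ z in 𝓝 0, fderiv ℝ f z (1, 0) = h z) ∧ ∀ᶠ b in 𝓝 0, f (0, b) = f₀ b := by
  have hswap : ContinuousAt (Prod.swap : ℝ × ℝ → ℝ × ℝ) 0 := continuous_swap.continuousAt
  obtain ⟨hderiv, hinit⟩ := fderiv_zero_one_eq_of_eq_integral (f := f ∘ Prod.swap)
    (h := h ∘ Prod.swap) (hf.comp (by unfold Prod.swap; fun_prop)) (hh.comp continuous_swap)
    (hswap.eventually hfh)
  refine ⟨?_, hinit⟩
  filter_upwards [hswap.eventually hderiv] with z hz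
  have hswap' : HasFDerivAt (Prod.swap : ℝ × ℝ → ℝ × ℝ)
    (ContinuousLinearEquiv.prodComm ℝ ℝ ℝ : ℝ × ℝ →L[ℝ] ℝ × ℝ) z.swap :=
    (ContinuousLinearEquiv.prodComm ℝ ℝ ℝ).hasFDerivAt
  rw [(HasFDerivAt.comp z.swap (hf z.swap.swap).hasFDerivAt hswap').fderiv] at hz
  simpa using hz

theorem intervalIntegral_prodMk {f : ℝ → M} {g : ℝ → N} (hf : Continuous f) (hg : Continuous g)
    (a b : ℝ) : ∫ x in a..b, (f x, g x) = (∫ x in a..b, f x, ∫ x in a..b, g x) :=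
  have hfg := (hf.prodMk hg).intervalIntegrable a b
  Prod.ext ((ContinuousLinearMap.fst ℝ M N).intervalIntegral_comp_comm hfg).symm
    ((ContinuousLinearMap.snd ℝ M N).intervalIntegral_comp_comm hfg).symm

theorem exists_goursat {F : (ℝ × ℝ) × M × N → M} {G : (ℝ × ℝ) × M × N → N} {U₀ : ℝ → M}
    {Z₀ : ℝ → N} (hF : ContDiff ℝ ∞ F) (hG : ContDiff ℝ ∞ G) (hU₀ : ContDiff ℝ ∞ U₀)
    (hZ₀ : ContDiff ℝ ∞ Z₀) :
    ∃ (U : ℝ × ℝ → M) (Z : ℝ × ℝ → N), ContDiff ℝ ∞ U ∧ ContDiff ℝ ∞ Z ∧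
      ((∀ᶠ z in 𝓝 0, fderiv ℝ U z (0, 1) = F (z, U z, Z z)) ∧ ∀ᶠ a in 𝓝 0, U (a, 0) = U₀ a) ∧
      (∀ᶠ z in 𝓝 0, fderiv ℝ Z z (1, 0) = G (z, U z, Z z)) ∧ ∀ᶠ b in 𝓝 0, Z (0, b) = Z₀ b := by
  -- Adjoining the independent variables to the unknowns makes the system autonomous.
  obtain ⟨u, hu, hint⟩ := exists_smooth_integral_solution
    (D := fun z : ℝ × ℝ => (z, U₀ z.1, Z₀ z.2)) (F := fun y => ((0 : ℝ × ℝ), F y, (0 : N)))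
    (G := fun y => ((0 : ℝ × ℝ), (0 : M), G y)) (by fun_prop) (by fun_prop) (by fun_prop)
  have hFu : Continuous fun z => F (u z) := hF.continuous.comp hu.continuous
  have hGu : Continuous fun z => G (u z) := hG.continuous.comp hu.continuous
  have hcomponents : ∀ᶠ z in 𝓝 0, (u z).1 = z ∧
      (u z).2.1 = U₀ z.1 + ∫ b in (0 : ℝ)..z.2, F (u (z.1, b)) ∧
      (u z).2.2 = Z₀ z.2 + ∫ a in (0 : ℝ)..z.1, G (u (a, z.2)) := by
    filter_upwards [hint] with z hz
    have hintF : ∫ b in (0 : ℝ)..z.2, ((0 : ℝ × ℝ), F (u (z.1, b)), (0 : N)) =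
        (0, ∫ b in (0 : ℝ)..z.2, F (u (z.1, b)), 0) := by
      rw [intervalIntegral_prodMk (by fun_prop) (by fun_prop),
        intervalIntegral_prodMk (f := fun b => F (u (z.1, b))) (by fun_prop) (by fun_prop)]
      simp
    have hintG : ∫ a in (0 : ℝ)..z.1, ((0 : ℝ × ℝ), (0 : M), G (u (a, z.2))) =
        (0, 0, ∫ a in (0 : ℝ)..z.1, G (u (a, z.2))) := by
      rw [intervalIntegral_prodMk (by fun_prop) (by fun_prop),
        intervalIntegral_prodMk (g := fun a => G (u (a, z.2))) (by fun_prop) (by fun_prop)]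
      simp
    rw [hintF, hintG] at hz
    simpa [Prod.ext_iff] using hz
  have hU : ContDiff ℝ ∞ fun z => (u z).2.1 := by fun_prop
  have hZ : ContDiff ℝ ∞ fun z => (u z).2.2 := by fun_prop
  have hsolU := fderiv_zero_one_eq_of_eq_integral (hU.differentiable (by simp)) hFu
    (hcomponents.mono fun z hz => hz.2.1)
  have hsolZ := fderiv_one_zero_eq_of_eq_integral (hZ.differentiable (by simp)) hGu
    (hcomponents.mono fun z hz => hz.2.2)
  have hself : ∀ᶠ z in 𝓝 0, u z = (z, (u z).2.1, (u z).2.2) :=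
    hcomponents.mono fun z hz => Prod.ext hz.1 rfl
  exact ⟨_, _, hU, hZ,
    ⟨by filter_upwards [hself, hsolU.1] with z hz hd; rw [hd, ← hz], hsolU.2⟩,
    by filter_upwards [hself, hsolZ.1] with z hz hd; rw [hd, ← hz], hsolZ.2⟩

end Goursat

section LinearODE

variable {M : Type*} [NormedAddCommGroup M] [NormedSpace ℝ M]

theorem exists_smooth_parametric_ode [CompleteSpace M] {F : (ℝ × ℝ) × M → M} {U₀ : ℝ → M}
    (hF : ContDiff ℝ ∞ F) (hU₀ : ContDiff ℝ ∞ U₀) :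
    ∃ U : ℝ × ℝ → M, ContDiff ℝ ∞ U ∧ (∀ᶠ z in 𝓝 0, fderiv ℝ U z (0, 1) = F (z, U z)) ∧
      ∀ᶠ a in 𝓝 0, U (a, 0) = U₀ a := by
  obtain ⟨U, _, hU, _, ⟨hode, hinit⟩, _⟩ := exists_goursat
    (F := fun y : (ℝ × ℝ) × M × ℝ => F (y.1, y.2.1)) (G := fun _ => 0) (Z₀ := fun _ => 0)
    (by fun_prop) contDiff_const hU₀ contDiff_const
  exact ⟨U, hU, hode, hinit⟩

theorem eventually_eq_zero_of_fderiv_zero_one_eq {f : ℝ × ℝ → M} {L : ℝ × ℝ → M →L[ℝ] M}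
    (hf : Differentiable ℝ f) (hL : ContinuousAt L 0)
    (hode : ∀ᶠ z in 𝓝 0, fderiv ℝ f z (0, 1) = L z (f z)) (hinit : ∀ᶠ a in 𝓝 0, f (a, 0) = 0) :
    ∀ᶠ z in 𝓝 0, f z = 0 := by
  have hbound : ∀ᶠ z in 𝓝 0, ‖L z‖₊ < ‖L 0‖₊ + 1 :=
    hL.nnnorm.eventually (gt_mem_nhds (lt_add_one _))
  have hinit' : ∀ᶠ z : ℝ × ℝ in 𝓝 0, f (z.1, 0) = 0 :=
    (continuous_fst.tendsto (0 : ℝ × ℝ)).eventually hinit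
  obtain ⟨δ, hδ, hball⟩ := Metric.eventually_nhds_iff_ball.1 (hode.and (hbound.and hinit'))
  filter_upwards [Metric.ball_mem_nhds 0 hδ] with z hz
  rw [ball_zero_eq] at hball hz
  obtain ⟨hz₁, hz₂⟩ := max_lt_iff.1 (mem_ofPred.1 hz)
  have hmem {t : ℝ} (ht : t ∈ Ioo (-δ) δ) : (z.1, t) ∈ {z : ℝ × ℝ | ‖z‖ < δ} :=
    max_lt hz₁ (abs_lt.2 ht)
  refine ODE_solution_unique_of_mem_Ioo (v := fun t => L (z.1, t)) (s := fun _ => univ)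
    (K := ‖L 0‖₊ + 1) (f := fun t => f (z.1, t)) (g := fun _ => 0) (a := -δ) (b := δ)
    (fun t ht => ((L (z.1, t)).lipschitz.weaken (hball _ (hmem ht)).2.1.le).lipschitzOnWith)
    ⟨neg_lt_zero.2 hδ, hδ⟩ (fun t ht => ⟨?_, mem_univ _⟩)
    (fun t _ => ⟨by simpa using hasDerivAt_const t (0 : M), mem_univ _⟩)
    (hball _ hz).2.2 (abs_lt.1 hz₂)
  rw [← (hball _ (hmem ht)).1]
  exact hasDerivAt_comp_prodMk_right (hf (z.1, t))

end LinearODE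

/-! ### Differential one-forms and the Frobenius theorem in the plane -/

section ExteriorDerivative

variable {M N F G : Type*} [NormedAddCommGroup M] [NormedSpace ℝ M] [NormedAddCommGroup N]
  [NormedSpace ℝ N] [NormedAddCommGroup F] [NormedSpace ℝ F] [NormedAddCommGroup G]
  [NormedSpace ℝ G]

/-- The exterior derivative `dα (v, w)` of a vector-valued one-form `α`. One-forms are kept as
maps into `M →L[ℝ] F`, so that they can be applied and composed directly; `extDeriv` is the
analogue for forms bundled as alternating maps. -/
def extd (α : M → M →L[ℝ] F) (z v w : M) : F :=
  fderiv ℝ α z v w - fderiv ℝ α z w v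

theorem fderiv_fderiv_apply_comm {f : M → F} {z : M} (hf : ContDiffAt ℝ ∞ f z) (v w : M) :
    fderiv ℝ (fun y => fderiv ℝ f y v) z w = fderiv ℝ (fun y => fderiv ℝ f y w) z v := by
  have hf' : DifferentiableAt ℝ (fderiv ℝ f) z :=
    (hf.fderiv_right (m := ∞) (by simp)).differentiableAt (by simp)
  rw [fderiv_clm_apply hf' (differentiableAt_const v),
    fderiv_clm_apply hf' (differentiableAt_const w)]
  have hsymm : IsSymmSndFDerivAt ℝ f z :=
    hf.isSymmSndFDerivAt (by simpa using WithTop.coe_le_coe.2 (le_top : (2 : ℕ∞) ≤ ⊤))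
  simpa using hsymm.eq w v

theorem extd_apply_eq {α : M → M →L[ℝ] F} {z : M} (hα : DifferentiableAt ℝ α z) (v w : M) :
    extd α z v w = fderiv ℝ (fun y => α y w) z v - fderiv ℝ (fun y => α y v) z w := by
  rw [fderiv_clm_apply hα (differentiableAt_const v),
    fderiv_clm_apply hα (differentiableAt_const w)]
  simp [extd]

theorem extd_clm_comp {α : M → M →L[ℝ] F} {z : M} (L : F →L[ℝ] G) (hα : DifferentiableAt ℝ α z)
    (v w : M) : extd (fun y => L ∘L α y) z v w = L (extd α z v w) := by
  have hLα : HasFDerivAt (fun y => L ∘L α y)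
      (ContinuousLinearMap.compL ℝ M F G L ∘L fderiv ℝ α z) z :=
    (ContinuousLinearMap.compL ℝ M F G L).hasFDerivAt.comp z hα.hasFDerivAt
  simp [extd, hLα.fderiv]

theorem contDiff_extd_apply {α : M → M →L[ℝ] F} (hα : ContDiff ℝ ∞ α) (v w : M) :
    ContDiff ℝ ∞ fun z => extd α z v w := by
  have hderiv : ContDiff ℝ ∞ (fderiv ℝ α) := hα.fderiv_right (by simp)
  exact ((hderiv.clm_apply contDiff_const).clm_apply contDiff_const).sub
    ((hderiv.clm_apply contDiff_const).clm_apply contDiff_const)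

theorem extd_eq_smul (b : Module.Basis (Fin 2) ℝ M) (α : M → M →L[ℝ] F) (z v w : M) :
    extd α z v w =
      (b.repr v 0 * b.repr w 1 - b.repr v 1 * b.repr w 0) • extd α z (b 0) (b 1) := by
  conv_lhs => rw [← b.sum_repr v, ← b.sum_repr w]
  simp only [extd, Fin.sum_univ_two, map_add, map_smul, _root_.add_apply, _root_.smul_apply]
  module

/-- The pullback of a one-form along a map. -/
def pullback (X : N → M) (α : M → M →L[ℝ] F) (z : N) : N →L[ℝ] F :=
  α (X z) ∘L fderiv ℝ X z

theorem contDiff_pullback {X : N → M} {α : M → M →L[ℝ] F} (hX : ContDiff ℝ ∞ X)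
    (hα : ContDiff ℝ ∞ α) : ContDiff ℝ ∞ (pullback X α) :=
  (hα.comp hX).clm_comp (hX.fderiv_right (by simp))

theorem fderiv_pullback_apply {X : N → M} {α : M → M →L[ℝ] F} {z : N} (hX : ContDiffAt ℝ ∞ X z)
    (hα : DifferentiableAt ℝ α (X z)) (v w : N) :
    fderiv ℝ (fun y => pullback X α y w) z v =
      fderiv ℝ α (X z) (fderiv ℝ X z v) (fderiv ℝ X z w) +
        α (X z) (fderiv ℝ (fun y => fderiv ℝ X y w) z v) := by
  have hX' : DifferentiableAt ℝ (fun y => fderiv ℝ X y w) z :=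
    ((hX.fderiv_right (m := ∞) (by simp)).differentiableAt (by simp)).clm_apply
      (differentiableAt_const w)
  have hαX : HasFDerivAt (fun y => α (X y)) (fderiv ℝ α (X z) ∘L fderiv ℝ X z) z :=
    hα.hasFDerivAt.comp z (hX.differentiableAt (by simp)).hasFDerivAt
  have hpullback : HasFDerivAt (fun y => pullback X α y w) _ z := hαX.clm_apply hX'.hasFDerivAt
  simp [hpullback.fderiv, add_comm]

theorem extd_pullback {X : N → M} {α : M → M →L[ℝ] F} {z : N} (hX : ContDiffAt ℝ ∞ X z)
    (hα : DifferentiableAt ℝ α (X z)) (v w : N) :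
    extd (pullback X α) z v w = extd α (X z) (fderiv ℝ X z v) (fderiv ℝ X z w) := by
  have hpullback : DifferentiableAt ℝ (pullback X α) z :=
    (hα.comp z (hX.differentiableAt (by simp))).clm_comp
      ((hX.fderiv_right (m := ∞) (by simp)).differentiableAt (by simp))
  rw [extd_apply_eq hpullback, fderiv_pullback_apply hX hα, fderiv_pullback_apply hX hα,
    fderiv_fderiv_apply_comm hX, add_sub_add_right_eq_sub, extd]

end ExteriorDerivative

section Frobenius

variable {𝔸 : Type*} [NormedRing 𝔸] [NormedAlgebra ℝ 𝔸]

theorem fderiv_sub_mul_of_flat {Ω : ℝ × ℝ → ℝ × ℝ →L[ℝ] 𝔸} {A : ℝ × ℝ → 𝔸} {z v w : ℝ × ℝ}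
    (hΩ : DifferentiableAt ℝ Ω z) (hA : ContDiffAt ℝ ∞ A z)
    (hAw : ∀ᶠ y in 𝓝 z, fderiv ℝ A y w = Ω y w * A y)
    (hflat : extd Ω z v w = Ω z v * Ω z w - Ω z w * Ω z v) :
    fderiv ℝ (fun y => fderiv ℝ A y v - Ω y v * A y) z w =
      Ω z w * (fderiv ℝ A z v - Ω z v * A z) := by
  have hdA : DifferentiableAt ℝ A z := hA.differentiableAt (by simp)
  have hA' : DifferentiableAt ℝ (fun y => fderiv ℝ A y v) z :=
    ((hA.fderiv_right (m := ∞) (by simp)).differentiableAt (by simp)).clm_apply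
      (differentiableAt_const v)
  have hΩ' (u : ℝ × ℝ) : DifferentiableAt ℝ (fun y => Ω y u) z :=
    hΩ.clm_apply (differentiableAt_const u)
  have hmul (u x : ℝ × ℝ) : fderiv ℝ (fun y => Ω y u * A y) z x =
      Ω z u * fderiv ℝ A z x + fderiv ℝ (fun y => Ω y u) z x * A z := by
    rw [fderiv_fun_mul' (hΩ' u) hdA]
    rfl
  have hcomm : fderiv ℝ (fun y => fderiv ℝ A y v) z w =
      fderiv ℝ (fun y => Ω y w * A y) z v := by
    rw [fderiv_fderiv_apply_comm hA, EventuallyEq.fderiv_eq hAw]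
  rw [extd_apply_eq hΩ, sub_eq_iff_eq_add] at hflat
  rw [fderiv_fun_sub hA' ((hΩ' v).fun_mul hdA), _root_.sub_apply, hcomm, hmul, hmul, hflat,
    hAw.self_of_nhds]
  noncomm_ring

theorem exists_frobenius_solution [CompleteSpace 𝔸] {Ω : ℝ × ℝ → ℝ × ℝ →L[ℝ] 𝔸}
    (hΩ : ContDiff ℝ ∞ Ω)
    (hflat : ∀ᶠ z in 𝓝 0, extd Ω z (1, 0) (0, 1) =
      Ω z (1, 0) * Ω z (0, 1) - Ω z (0, 1) * Ω z (1, 0)) :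
    ∃ A : ℝ × ℝ → 𝔸, ContDiff ℝ ∞ A ∧ A 0 = 1 ∧
      ∀ᶠ z in 𝓝 0, ∀ v, fderiv ℝ A z v = Ω z v * A z := by
  obtain ⟨Z, hZ, hZode, hZinit⟩ := exists_smooth_parametric_ode
    (F := fun y : (ℝ × ℝ) × 𝔸 => Ω (y.1.2, 0) (1, 0) * y.2) (U₀ := fun _ => 1)
    (by fun_prop) contDiff_const
  obtain ⟨A, hA, hAode, hAinit⟩ := exists_smooth_parametric_ode
    (F := fun y : (ℝ × ℝ) × 𝔸 => Ω y.1 (0, 1) * y.2) (U₀ := fun a => Z (0, a))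
    (by fun_prop) (by fun_prop)
  have hdA : Differentiable ℝ A := hA.differentiable (by simp)
  let defect : ℝ × ℝ → 𝔸 := fun z => fderiv ℝ A z (1, 0) - Ω z (1, 0) * A z
  have hdefect : ContDiff ℝ ∞ defect :=
    ((hA.fderiv_right (by simp)).clm_apply contDiff_const).sub
      ((hΩ.clm_apply contDiff_const).mul hA)
  have hdefect_ode : ∀ᶠ z in 𝓝 0, fderiv ℝ defect z (0, 1) =
      ContinuousLinearMap.mul ℝ 𝔸 (Ω z (0, 1)) (defect z) := by
    filter_upwards [hflat, hAode.eventually_nhds] with z hz hAz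
    exact fderiv_sub_mul_of_flat (hΩ.differentiable (by simp) z) hA.contDiffAt hAz hz
  have hdefect_init : ∀ᶠ a in 𝓝 0, defect (a, 0) = 0 := by
    have hcont : ContinuousAt (fun a : ℝ => ((0 : ℝ), a)) 0 := by fun_prop
    filter_upwards [hcont.eventually hZode, hAinit.eventually_nhds] with a hZa hAa
    have hZ' := hasDerivAt_comp_prodMk_right (hZ.differentiable (by simp) (0, a))
    have hAZ : (fun x => A (x, 0)) =ᶠ[𝓝 a] fun x => Z (0, x) := hAa
    have hA' := (hasDerivAt_comp_prodMk_left (hdA (a, 0))).congr_of_eventuallyEq hAZ.symm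
    simp only [defect]
    rw [hA'.unique hZ', hZa, hAZ.eq_of_nhds, sub_self]
  have hcont : Continuous fun z => ContinuousLinearMap.mul ℝ 𝔸 (Ω z (0, 1)) :=
    (ContinuousLinearMap.mul ℝ 𝔸).continuous.comp (hΩ.continuous.clm_apply continuous_const)
  have hdefect_zero : ∀ᶠ z in 𝓝 0, defect z = 0 :=
    eventually_eq_zero_of_fderiv_zero_one_eq (hdefect.differentiable (by simp))
      hcont.continuousAt hdefect_ode hdefect_init
  refine ⟨A, hA, hAinit.self_of_nhds.trans hZinit.self_of_nhds, ?_⟩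
  filter_upwards [hdefect_zero, hAode] with z hz₁ hz₂ v
  have hv : v = v.1 • ((1 : ℝ), (0 : ℝ)) + v.2 • ((0 : ℝ), (1 : ℝ)) := by simp
  rw [hv, map_add, map_add, map_smul, map_smul, map_smul, map_smul, hz₂, sub_eq_zero.1 hz₁,
    add_mul, smul_mul_assoc, smul_mul_assoc]

end Frobenius

section Development

variable {M : Type*} [NormedAddCommGroup M] [NormedSpace ℝ M]

theorem eventually_eq_of_fderiv_eq_zero {F : Type*} [NormedAddCommGroup F] [NormedSpace ℝ F]
    {f : M → F} {p : M} (hf : Differentiable ℝ f) (hf' : ∀ᶠ z in 𝓝 p, fderiv ℝ f z = 0) :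
    ∀ᶠ z in 𝓝 p, f z = f p := by
  obtain ⟨ε, hε, hball⟩ := Metric.eventually_nhds_iff_ball.1 hf'
  filter_upwards [Metric.ball_mem_nhds p hε] with z hz
  exact Metric.isOpen_ball.is_const_of_fderiv_eq_zero (convex_ball p ε).isPreconnected
    hf.differentiableOn (fun x hx => hball x hx) hz (Metric.mem_ball_self hε)

theorem eventually_mul_star_eq_one {𝔸 : Type*} [NormedRing 𝔸] [NormedAlgebra ℝ 𝔸] [CompleteSpace 𝔸]
    [StarRing 𝔸] [NormedStarGroup 𝔸] [StarModule ℝ 𝔸] {Ω : M → M →L[ℝ] 𝔸} {A : M → 𝔸} {p : M}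
    (hA : Differentiable ℝ A) (hAp : A p = 1) (hΩ : ∀ᶠ z in 𝓝 p, ∀ v, star (Ω z v) = -Ω z v)
    (hode : ∀ᶠ z in 𝓝 p, ∀ v, fderiv ℝ A z v = Ω z v * A z) :
    ∀ᶠ z in 𝓝 p, A z * star (A z) = 1 := by
  have hunit : ∀ᶠ z in 𝓝 p, IsUnit (A z) :=
    hA.continuous.continuousAt.eventually (Units.isOpen.mem_nhds (by simp [hAp]))
  have hconst : ∀ᶠ z in 𝓝 p, star (A z) * A z = star (A p) * A p := by
    refine eventually_eq_of_fderiv_eq_zero (hA.star.mul hA) ?_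
    filter_upwards [hΩ, hode] with z hskew hz
    ext v
    have hderiv : HasFDerivAt (fun y => star (A y) * A y) _ z :=
      (hA z).hasFDerivAt.star.mul' (hA z).hasFDerivAt
    rw [hderiv.fderiv]
    simp [hz, hskew, mul_assoc]
  filter_upwards [hunit, hconst] with z hz hAA
  obtain ⟨B, hB⟩ := hz.exists_right_inv
  rw [hAp, star_one, one_mul] at hAA
  rwa [left_inv_eq_right_inv hAA hB]

theorem exists_smooth_primitive {F : Type*} [NormedAddCommGroup F] [NormedSpace ℝ F]
    [CompleteSpace F] [HasContDiffBump M] {β : M → M →L[ℝ] F} {p : M} (hβ : ContDiff ℝ ∞ β)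
    (hclosed : ∀ᶠ z in 𝓝 p, ∀ v w, extd β z v w = 0) :
    ∃ r : M → F, ContDiff ℝ ∞ r ∧ ∀ᶠ z in 𝓝 p, fderiv ℝ r z = β z := by
  obtain ⟨ε, hε, hball⟩ := Metric.eventually_nhds_iff_ball.1 hclosed
  obtain ⟨r, hr⟩ := (convex_ball p ε).exists_forall_hasFDerivAt_of_fderiv_symmetric
    Metric.isOpen_ball (hβ.differentiable (by simp)).differentiableOn
    (fun z hz v w => sub_eq_zero.1 (hball z hz v w))
  have hr' : ContDiffOn ℝ ∞ r (Metric.ball p ε) :=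
    (contDiffOn_infty_iff_fderiv_of_isOpen Metric.isOpen_ball).2
      ⟨fun z hz => (hr z hz).differentiableAt.differentiableWithinAt,
        hβ.contDiffOn.congr fun z hz => (hr z hz).fderiv⟩
  have hmem : ∀ᶠ z in 𝓝 p, z ∈ Metric.ball p ε := Metric.ball_mem_nhds p hε
  obtain ⟨ρ, hρ, hρr⟩ := exists_contDiff_eventuallyEq
    (hmem.mono fun z hz => hr'.contDiffAt (Metric.isOpen_ball.mem_nhds hz))
  refine ⟨ρ, hρ, ?_⟩
  filter_upwards [hmem, hρr.eventually_nhds] with z hz hρz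
  rw [EventuallyEq.fderiv_eq hρz, (hr z hz).fderiv]

variable {H : Type*} [NormedAddCommGroup H] [InnerProductSpace ℝ H] [CompleteSpace H]

theorem extd_star_comp {A : M → H →L[ℝ] H} {Ω : M → M →L[ℝ] H →L[ℝ] H} {θ : M → M →L[ℝ] H}
    {z v w : M} (hA : DifferentiableAt ℝ A z) (hθ : DifferentiableAt ℝ θ z)
    (hskew : ∀ v, star (Ω z v) = -Ω z v) (hode : ∀ v, fderiv ℝ A z v = Ω z v * A z) :
    extd (fun y => star (A y) ∘L θ y) z v w =
      star (A z) (extd θ z v w - (Ω z v (θ z w) - Ω z w (θ z v))) := by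
  have hderiv := hA.hasFDerivAt.star.clm_comp hθ.hasFDerivAt
  simp only [extd, hderiv.fderiv]
  simp [hode, hskew]
  abel

theorem exists_development {θ : ℝ × ℝ → ℝ × ℝ →L[ℝ] H} {Ω : ℝ × ℝ → ℝ × ℝ →L[ℝ] H →L[ℝ] H}
    (hθ : ContDiff ℝ ∞ θ) (hΩ : ContDiff ℝ ∞ Ω)
    (hskew : ∀ᶠ z in 𝓝 0, ∀ v, star (Ω z v) = -Ω z v)
    (hflat : ∀ᶠ z in 𝓝 0, ∀ v w, extd Ω z v w = Ω z v * Ω z w - Ω z w * Ω z v)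
    (htorsion : ∀ᶠ z in 𝓝 0, ∀ v w, extd θ z v w = Ω z v (θ z w) - Ω z w (θ z v)) :
    ∃ r : ℝ × ℝ → H, ContDiff ℝ ∞ r ∧
      ∀ᶠ z in 𝓝 0, ∀ v w, ⟪fderiv ℝ r z v, fderiv ℝ r z w⟫_ℝ = ⟪θ z v, θ z w⟫_ℝ := by
  obtain ⟨A, hA, hA₀, hode⟩ := exists_frobenius_solution hΩ (hflat.mono fun z hz => hz _ _)
  have hdA : Differentiable ℝ A := hA.differentiable (by simp)
  have hclosed : ∀ᶠ z in 𝓝 0, ∀ v w, extd (fun y => star (A y) ∘L θ y) z v w = 0 := by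
    filter_upwards [hskew, hode, htorsion] with z hz₁ hz₂ hz₃ v w
    rw [extd_star_comp (hdA z) (hθ.differentiable (by simp) z) hz₁ hz₂, hz₃, sub_self, map_zero]
  have hstar : ContDiff ℝ ∞ fun z => star (A z) :=
    (starL' ℝ : (H →L[ℝ] H) ≃L[ℝ] (H →L[ℝ] H)).contDiff.comp hA
  obtain ⟨r, hr, hr'⟩ := exists_smooth_primitive (hstar.clm_comp hθ) hclosed
  refine ⟨r, hr, ?_⟩
  filter_upwards [hr', eventually_mul_star_eq_one hdA hA₀ hskew hode] with z hz hAz v w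
  have horth : A z (star (A z) (θ z w)) = θ z w := DFunLike.congr_fun hAz (θ z w)
  rw [hz, ContinuousLinearMap.comp_apply, ContinuousLinearMap.comp_apply,
    ContinuousLinearMap.star_eq_adjoint, ContinuousLinearMap.adjoint_inner_left,
    ← ContinuousLinearMap.star_eq_adjoint, horth]

end Development

/-! ### The fundamental theorem of surfaces -/

section FrameOperator

open ComplexConjugate

/-- Euclidean three-space, split into a tangent plane `ℂ` and a normal line `ℝ`. -/
abbrev PlaneLine := WithLp 2 (ℂ × ℝ)

@[ext]
theorem PlaneLine.ext {h k : PlaneLine} (hfst : h.fst = k.fst) (hsnd : h.snd = k.snd) : h = k :=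
  WithLp.ofLp_injective 2 (Prod.ext hfst hsnd)

/-- The infinitesimal motion of an adapted frame: `x.1` is the rate at which the tangent plane
rotates in itself and `x.2` the rate at which the normal turns. Applied to the values of the
connection form and of the `ℂ`-valued second fundamental form it gives the connection matrix. -/
def frameOperator : ℝ × ℂ →L[ℝ] PlaneLine →L[ℝ] PlaneLine :=
  LinearMap.toContinuousLinearMap
    { toFun x := LinearMap.toContinuousLinearMap
        { toFun h := WithLp.toLp 2 (-Complex.I * x.1 * h.fst + h.snd * x.2, -⟪x.2, h.fst⟫_ℝ)
          map_add' _ _ := by ext <;> simp [inner_add_right] <;> ring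
          map_smul' _ _ := by ext <;> simp <;> ring }
      map_add' _ _ := by ext <;> simp [inner_add_left] <;> ring
      map_smul' _ _ := by ext <;> simp <;> ring }

theorem frameOperator_apply (x : ℝ × ℂ) (h : PlaneLine) : frameOperator x h =
    WithLp.toLp 2 (-Complex.I * x.1 * h.fst + h.snd * x.2, -⟪x.2, h.fst⟫_ℝ) :=
  rfl

theorem star_frameOperator (x : ℝ × ℂ) : star (frameOperator x) = -frameOperator x := by
  rw [ContinuousLinearMap.star_eq_adjoint, eq_comm, ContinuousLinearMap.eq_adjoint_iff]
  intro h k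
  simp [frameOperator_apply, Complex.inner]
  ring

theorem frameOperator_commutator (x y : ℝ × ℂ) :
    frameOperator x * frameOperator y - frameOperator y * frameOperator x =
      frameOperator (-(conj x.2 * y.2).im, -Complex.I * (x.1 * y.2 - y.1 * x.2)) := by
  ext h
  · apply Complex.ext <;> simp [frameOperator_apply, Complex.inner] <;> ring
  · simp [frameOperator_apply, Complex.inner]
    ring

variable {M : Type*} [NormedAddCommGroup M] [NormedSpace ℝ M]

/-- The connection matrix of the adapted frame with connection form `φ` and `ℂ`-valued second
fundamental form `α`. -/
def frameConnection (φ : M → M →L[ℝ] ℝ) (α : M → M →L[ℝ] ℂ) (z : M) :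
    M →L[ℝ] PlaneLine →L[ℝ] PlaneLine :=
  frameOperator ∘L (φ z).prod (α z)

theorem contDiff_frameConnection {φ : M → M →L[ℝ] ℝ} {α : M → M →L[ℝ] ℂ}
    (hφ : ContDiff ℝ ∞ φ) (hα : ContDiff ℝ ∞ α) : ContDiff ℝ ∞ (frameConnection φ α) :=
  contDiff_const.clm_comp
    ((ContinuousLinearMap.prodₗᵢ (𝕜 := ℝ) ℝ (E := M) (F := ℝ) (G := ℂ)).contDiff.comp
      (hφ.prodMk hα))

theorem extd_frameConnection {φ : M → M →L[ℝ] ℝ} {α : M → M →L[ℝ] ℂ} {z : M}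
    (hφ : DifferentiableAt ℝ φ z) (hα : DifferentiableAt ℝ α z) (v w : M) :
    extd (frameConnection φ α) z v w = frameOperator (extd φ z v w, extd α z v w) := by
  have hprod : DifferentiableAt ℝ (fun y => (φ y).prod (α y)) z :=
    (ContinuousLinearMap.prodₗᵢ (𝕜 := ℝ) ℝ (E := M) (F := ℝ) (G := ℂ)).differentiableAt.comp z
      (hφ.prodMk hα)
  have hfst := extd_clm_comp (ContinuousLinearMap.fst ℝ ℝ ℂ) hprod v w
  have hsnd := extd_clm_comp (ContinuousLinearMap.snd ℝ ℝ ℂ) hprod v w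
  exact (extd_clm_comp frameOperator hprod v w).trans
    (congrArg frameOperator (Prod.ext hfst.symm hsnd.symm))

/-- The exterior covariant derivative `dα + i φ ∧ α` of the `ℂ`-valued one-form `α` with respect to
the connection form `φ` vanishes at `z`. For an orthonormal coframe `α` this says that `φ` is its
Levi-Civita connection form, and for a second fundamental form it is the Codazzi equation. -/
def IsCovariantlyClosedAt (φ : M → M →L[ℝ] ℝ) (α : M → M →L[ℝ] ℂ) (z : M) : Prop :=
  ∀ v w, extd α z v w = -Complex.I * (φ z v * α z w - φ z w * α z v)

theorem isCovariantlyClosedAt_of_basis (b : Module.Basis (Fin 2) ℝ M) {φ : M → M →L[ℝ] ℝ}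
    {α : M → M →L[ℝ] ℂ} {z : M}
    (h : extd α z (b 0) (b 1) = -Complex.I * (φ z (b 0) * α z (b 1) - φ z (b 1) * α z (b 0))) :
    IsCovariantlyClosedAt φ α z := by
  intro v w
  rw [extd_eq_smul b, h]
  conv_rhs => rw [← b.sum_repr v, ← b.sum_repr w]
  simp only [Fin.sum_univ_two, map_add, map_smul, Complex.real_smul, smul_eq_mul]
  push_cast
  ring

theorem IsCovariantlyClosedAt.pullback {N : Type*} [NormedAddCommGroup N] [NormedSpace ℝ N]
    {φ : M → M →L[ℝ] ℝ} {α : M → M →L[ℝ] ℂ} {X : N → M} {z : N} (hX : ContDiffAt ℝ ∞ X z)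
    (hα : DifferentiableAt ℝ α (X z)) (h : IsCovariantlyClosedAt φ α (X z)) :
    IsCovariantlyClosedAt (pullback X φ) (pullback X α) z := fun v w =>
  (extd_pullback hX hα v w).trans (h _ _)

theorem exists_immersion_of_gauss_codazzi {θ α : ℝ × ℝ → ℝ × ℝ →L[ℝ] ℂ}
    {φ : ℝ × ℝ → ℝ × ℝ →L[ℝ] ℝ} (hθ : ContDiff ℝ ∞ θ) (hα : ContDiff ℝ ∞ α)
    (hφ : ContDiff ℝ ∞ φ)
    (htorsion : ∀ᶠ z in 𝓝 0, IsCovariantlyClosedAt φ θ z)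
    (hcodazzi : ∀ᶠ z in 𝓝 0, IsCovariantlyClosedAt φ α z)
    (hgauss : ∀ᶠ z in 𝓝 0, ∀ v w, extd φ z v w = -(conj (α z v) * α z w).im)
    (hsymm : ∀ᶠ z in 𝓝 0, ∀ v w, ⟪α z v, θ z w⟫_ℝ = ⟪α z w, θ z v⟫_ℝ) :
    ∃ V : ℝ × ℝ → PlaneLine, ContDiff ℝ ∞ V ∧
      ∀ᶠ z in 𝓝 0, ∀ v w, ⟪fderiv ℝ V z v, fderiv ℝ V z w⟫_ℝ = ⟪θ z v, θ z w⟫_ℝ := by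
  let tangent : ℂ →L[ℝ] PlaneLine :=
    (WithLp.prodContinuousLinearEquiv 2 ℝ ℂ ℝ).symm ∘L ContinuousLinearMap.inl ℝ ℂ ℝ
  have htangent (ζ : ℂ) : tangent ζ = WithLp.toLp 2 (ζ, 0) := rfl
  have hflat : ∀ᶠ z in 𝓝 0, ∀ v w, extd (frameConnection φ α) z v w =
      frameConnection φ α z v * frameConnection φ α z w -
        frameConnection φ α z w * frameConnection φ α z v := by
    filter_upwards [hcodazzi, hgauss] with z hz₁ hz₂ v w
    rw [extd_frameConnection (hφ.differentiable (by simp) z) (hα.differentiable (by simp) z),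
      hz₁, hz₂]
    exact (frameOperator_commutator (φ z v, α z v) (φ z w, α z w)).symm
  have htorsion' : ∀ᶠ z in 𝓝 0, ∀ v w, extd (fun y => tangent ∘L θ y) z v w =
      frameConnection φ α z v (tangent (θ z w)) - frameConnection φ α z w (tangent (θ z v)) := by
    filter_upwards [htorsion, hsymm] with z hz₁ hz₂ v w
    rw [extd_clm_comp tangent (hθ.differentiable (by simp) z), hz₁]
    ext
    · simp [frameConnection, frameOperator_apply, htangent]
      ring
    · simpa [frameConnection, frameOperator_apply, htangent, -Complex.inner] using
        (neg_add_eq_zero.2 (hz₂ v w)).symm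
  obtain ⟨V, hV, hV'⟩ := exists_development (contDiff_const.clm_comp hθ)
    (contDiff_frameConnection hφ hα)
    (Eventually.of_forall fun z v => star_frameOperator _) hflat htorsion'
  exact ⟨V, hV, hV'.mono fun z hz v w => by simpa [htangent] using hz v w⟩

end FrameOperator

/-! ### Asymptotic coordinates on a negatively curved surface -/

section SemilinearWave

variable {M : Type*} [NormedAddCommGroup M] [NormedSpace ℝ M]

theorem eventually_fderiv_one_zero_eq {X P Q : ℝ × ℝ → M} {B : ℝ × ℝ → M} {p P₀ : M}
    (hX : ContDiff ℝ ∞ X) (hP : ContDiff ℝ ∞ P)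
    (hXQ : ∀ᶠ z in 𝓝 0, fderiv ℝ X z (0, 1) = Q z)
    (hPB : ∀ᶠ z in 𝓝 0, fderiv ℝ P z (0, 1) = B z)
    (hQB : ∀ᶠ z in 𝓝 0, fderiv ℝ Q z (1, 0) = B z)
    (hX₀ : ∀ᶠ a in 𝓝 0, X (a, 0) = p + a • P₀) (hP₀ : ∀ᶠ a in 𝓝 0, P (a, 0) = P₀) :
    ∀ᶠ z in 𝓝 0, fderiv ℝ X z (1, 0) = P z := by
  have hX' : ContDiff ℝ ∞ fun z => fderiv ℝ X z (1, 0) :=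
    (hX.fderiv_right (by simp)).clm_apply contDiff_const
  have hdX' := hX'.differentiable (by simp)
  have hdP := hP.differentiable (by simp)
  have hode : ∀ᶠ z in 𝓝 0, fderiv ℝ (fun y => fderiv ℝ X y (1, 0) - P y) z (0, 1) = 0 := by
    filter_upwards [hXQ.eventually_nhds, hPB, hQB] with z hXz hPz hQz
    rw [fderiv_fun_sub (hdX' z) (hdP z), _root_.sub_apply,
      fderiv_fderiv_apply_comm hX.contDiffAt, EventuallyEq.fderiv_eq hXz, hPz, hQz, sub_self]
  have hinit : ∀ᶠ a in 𝓝 0, fderiv ℝ X (a, 0) (1, 0) - P (a, 0) = 0 := by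
    filter_upwards [hX₀.eventually_nhds, hP₀] with a hXa hPa
    have hXa' : (fun x => X (x, 0)) =ᶠ[𝓝 a] fun x => p + x • P₀ := hXa
    have hline : HasDerivAt (fun x : ℝ => p + x • P₀) P₀ a := by
      simpa using ((hasDerivAt_id a).smul_const P₀).const_add p
    rw [(hasDerivAt_comp_prodMk_left (hX.differentiable (by simp) (a, 0))).unique
      (hline.congr_of_eventuallyEq hXa'), hPa, sub_self]
  filter_upwards [eventually_eq_zero_of_fderiv_zero_one_eq (L := 0) (hdX'.sub hdP)
    continuousAt_const hode hinit] with z hz using sub_eq_zero.1 hz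

theorem exists_semilinear_wave [CompleteSpace M] {B : M × M × M → M} (hB : ContDiff ℝ ∞ B)
    (p P₀ Q₀ : M) :
    ∃ X : ℝ × ℝ → M, ContDiff ℝ ∞ X ∧ X 0 = p ∧ fderiv ℝ X 0 (1, 0) = P₀ ∧
      fderiv ℝ X 0 (0, 1) = Q₀ ∧
      ∀ᶠ z in 𝓝 0, fderiv ℝ (fun y => fderiv ℝ X y (0, 1)) z (1, 0) =
        B (X z, fderiv ℝ X z (1, 0), fderiv ℝ X z (0, 1)) := by
  -- The first-order system for `X`, `P = ∂₁X` and `Q = ∂₂X`.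
  obtain ⟨U, Q, hU, _, ⟨hUode, hU₀⟩, hQB, hQ₀⟩ := exists_goursat
    (F := fun y : (ℝ × ℝ) × (M × M) × M => (y.2.2, B (y.2.1.1, y.2.1.2, y.2.2)))
    (G := fun y => B (y.2.1.1, y.2.1.2, y.2.2))
    (U₀ := fun a => (p + a • P₀, P₀)) (Z₀ := fun _ => Q₀)
    (by fun_prop) (by fun_prop) (by fun_prop) contDiff_const
  have hX : ContDiff ℝ ∞ fun z => (U z).1 := contDiff_fst.comp hU
  have hP : ContDiff ℝ ∞ fun z => (U z).2 := contDiff_snd.comp hU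
  have hU' (z : ℝ × ℝ) := (hU.differentiable (by simp) z).hasFDerivAt
  have hXQ : ∀ᶠ z in 𝓝 0, fderiv ℝ (fun y => (U y).1) z (0, 1) = Q z :=
    hUode.mono fun z hz => by simp [(hU' z).fst.fderiv, hz]
  have hPB : ∀ᶠ z in 𝓝 0, fderiv ℝ (fun y => (U y).2) z (0, 1) = B ((U z).1, (U z).2, Q z) :=
    hUode.mono fun z hz => by simp [(hU' z).snd.fderiv, hz]
  have hXP := eventually_fderiv_one_zero_eq hX hP hXQ hPB hQB
    (hU₀.mono fun a ha => congrArg Prod.fst ha) (hU₀.mono fun a ha => congrArg Prod.snd ha)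
  have hU₀' : U 0 = (p, P₀) := hU₀.self_of_nhds.trans (by simp)
  refine ⟨fun z => (U z).1, hX, congrArg Prod.fst hU₀', by rw [hXP.self_of_nhds, hU₀'],
    hXQ.self_of_nhds.trans hQ₀.self_of_nhds, ?_⟩
  filter_upwards [hXQ.eventually_nhds, hXP, hQB] with z hXz hPz hQz
  rw [EventuallyEq.fderiv_eq hXz, hQz, hPz, hXz.self_of_nhds]

end SemilinearWave

section AsymptoticCoordinates

open ComplexConjugate

variable {M : Type*} [NormedAddCommGroup M] [NormedSpace ℝ M]

theorem exists_smooth_right_inverse {E F : Type*} [NormedAddCommGroup E] [NormedSpace ℝ E]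
    [CompleteSpace E] [NormedAddCommGroup F] [NormedSpace ℝ F] [HasContDiffBump M]
    {η : M → E →L[ℝ] F} {p : M} (hη : ContDiff ℝ ∞ η) (e : E ≃L[ℝ] F) (hp : η p = e) :
    ∃ R : M → F →L[ℝ] E, ContDiff ℝ ∞ R ∧ ∀ᶠ x in 𝓝 p, ∀ ζ, η x (R x ζ) = ζ := by
  have hequiv : ∀ᶠ x in 𝓝 p, ∃ e' : E ≃L[ℝ] F, η x = e' := by
    have hmem : range ((↑) : (E ≃L[ℝ] F) → E →L[ℝ] F) ∈ 𝓝 (η p) := hp ▸ e.nhds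
    filter_upwards [hη.continuous.continuousAt.eventually hmem] with x ⟨e', he'⟩
    exact ⟨e', he'.symm⟩
  obtain ⟨R, hR, hRη⟩ := exists_contDiff_eventuallyEq
    (f := fun x => (η x).inverse) (x := p) <| hequiv.mono fun x ⟨e', he'⟩ => by
      have hinv : ContDiffAt ℝ ∞ ContinuousLinearMap.inverse (η x) :=
        he' ▸ contDiffAt_map_inverse e'
      exact hinv.comp x hη.contDiffAt
  refine ⟨R, hR, ?_⟩
  filter_upwards [hequiv, hRη] with x ⟨e', he'⟩ hx ζ
  rw [hx, he', ContinuousLinearMap.inverse_equiv]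
  exact e'.apply_symm_apply ζ

/-- The second fundamental form `i η (v₁, -v₂)`, for which the coordinate directions are
asymptotic. If the Gauss curvature is `-k²` and `θ` is an orthonormal coframe, the second
fundamental form of a surface in asymptotic coordinates is of this shape with `η = k θ`. -/
def asymptoticForm (η : ℝ × ℝ → ℝ × ℝ →L[ℝ] ℂ) (z : ℝ × ℝ) : ℝ × ℝ →L[ℝ] ℂ :=
  Complex.I • η z ∘L (ContinuousLinearMap.fst ℝ ℝ ℝ).prod (-ContinuousLinearMap.snd ℝ ℝ ℝ)

theorem asymptoticForm_apply (η : ℝ × ℝ → ℝ × ℝ →L[ℝ] ℂ) (z v : ℝ × ℝ) :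
    asymptoticForm η z v = Complex.I * (v.1 * η z (1, 0) - v.2 * η z (0, 1)) := by
  have hv : ((v.1, -v.2) : ℝ × ℝ) = v.1 • ((1 : ℝ), (0 : ℝ)) - v.2 • ((0 : ℝ), (1 : ℝ)) := by simp
  change Complex.I * η z (v.1, -v.2) = _
  rw [hv, map_sub, map_smul, map_smul, Complex.real_smul, Complex.real_smul]

theorem contDiff_asymptoticForm {η : ℝ × ℝ → ℝ × ℝ →L[ℝ] ℂ} (hη : ContDiff ℝ ∞ η) :
    ContDiff ℝ ∞ (asymptoticForm η) :=
  (hη.clm_comp contDiff_const).const_smul Complex.I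

theorem clm_apply_prod_eq (L : ℝ × ℝ →L[ℝ] ℂ) (v : ℝ × ℝ) :
    L v = v.1 * L (1, 0) + v.2 * L (0, 1) := by
  have hv : v = v.1 • ((1 : ℝ), (0 : ℝ)) + v.2 • ((0 : ℝ), (1 : ℝ)) := by simp
  conv_lhs => rw [hv]
  rw [map_add, map_smul, map_smul, Complex.real_smul, Complex.real_smul]

theorem im_conj_asymptoticForm_mul (η : ℝ × ℝ → ℝ × ℝ →L[ℝ] ℂ) (z v w : ℝ × ℝ) :
    (conj (asymptoticForm η z v) * asymptoticForm η z w).im = -(conj (η z v) * η z w).im := by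
  rw [asymptoticForm_apply, asymptoticForm_apply, clm_apply_prod_eq (η z) v,
    clm_apply_prod_eq (η z) w]
  simp
  ring

theorem inner_asymptoticForm_comm {η θ : ℝ × ℝ → ℝ × ℝ →L[ℝ] ℂ} {z : ℝ × ℝ} {c : ℝ}
    (hη : η z = c • θ z) (v w : ℝ × ℝ) :
    ⟪asymptoticForm η z v, θ z w⟫_ℝ = ⟪asymptoticForm η z w, θ z v⟫_ℝ := by
  rw [asymptoticForm_apply, asymptoticForm_apply, clm_apply_prod_eq (θ z) v,
    clm_apply_prod_eq (θ z) w, hη]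
  simp [Complex.inner]
  ring

theorem isCovariantlyClosedAt_asymptoticForm {φ : ℝ × ℝ → ℝ × ℝ →L[ℝ] ℝ}
    {η : ℝ × ℝ → ℝ × ℝ →L[ℝ] ℂ} {z : ℝ × ℝ} (hη : DifferentiableAt ℝ η z)
    (h : fderiv ℝ (fun y => η y (0, 1)) z (1, 0) + fderiv ℝ (fun y => η y (1, 0)) z (0, 1) =
      -Complex.I * (φ z (1, 0) * η z (0, 1) + φ z (0, 1) * η z (1, 0))) :
    IsCovariantlyClosedAt φ (asymptoticForm η) z := by
  have hform : DifferentiableAt ℝ (asymptoticForm η) z :=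
    (hη.clm_comp (differentiableAt_const _)).const_smul Complex.I
  have hη' (u : ℝ × ℝ) : DifferentiableAt ℝ (fun y => η y u) z :=
    hη.clm_apply (differentiableAt_const u)
  apply isCovariantlyClosedAt_of_basis (Module.Basis.finTwoProd ℝ)
  rw [Module.Basis.finTwoProd_zero, Module.Basis.finTwoProd_one, extd_apply_eq hform]
  simp only [asymptoticForm_apply, Complex.ofReal_zero, Complex.ofReal_one, zero_mul, one_mul,
    zero_sub, sub_zero, mul_neg, fderiv_fun_neg, fderiv_const_mul (hη' _), _root_.neg_apply,
    _root_.smul_apply, smul_eq_mul]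
  linear_combination -Complex.I * h

theorem exists_asymptotic_coordinates {η : M → M →L[ℝ] ℂ}
    {φ : M → M →L[ℝ] ℝ} {p : M} (hη : ContDiff ℝ ∞ η) (hφ : ContDiff ℝ ∞ φ) (e : M ≃L[ℝ] ℂ)
    (hp : η p = e) :
    ∃ (X : ℝ × ℝ → M) (D : (ℝ × ℝ) ≃L[ℝ] M), ContDiff ℝ ∞ X ∧ X 0 = p ∧
      HasFDerivAt X (D : ℝ × ℝ →L[ℝ] M) 0 ∧
      ∀ᶠ z in 𝓝 0, IsCovariantlyClosedAt (pullback X φ) (asymptoticForm (pullback X η)) z := by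
  have := e.symm.toLinearEquiv.finiteDimensional
  have := FiniteDimensional.complete ℝ M
  obtain ⟨R, hR, hRη⟩ := exists_smooth_right_inverse hη e hp
  have : ContDiff ℝ ∞ (fderiv ℝ η) := hη.fderiv_right (by simp)
  let D : (ℝ × ℝ) ≃L[ℝ] M := Complex.equivRealProdCLM.symm.trans e.symm
  -- The Codazzi equation is solved for `∂₁∂₂X`.
  obtain ⟨X, hX, hX₀, hXa, hXb, hwave⟩ := exists_semilinear_wave
    (B := fun y : M × M × M => (1 / 2 : ℝ) • R y.1
      (-Complex.I * (φ y.1 y.2.1 • η y.1 y.2.2 + φ y.1 y.2.2 • η y.1 y.2.1)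
        - fderiv ℝ η y.1 y.2.1 y.2.2 - fderiv ℝ η y.1 y.2.2 y.2.1))
    (by fun_prop) p (D (1, 0)) (D (0, 1))
  have hD : fderiv ℝ X 0 = D := by ext <;> simp [hXa, hXb]
  refine ⟨X, D, hX, hX₀, hD ▸ (hX.differentiable (by simp) 0).hasFDerivAt, ?_⟩
  have hXp : Tendsto X (𝓝 0) (𝓝 p) := hX₀ ▸ hX.continuous.continuousAt
  filter_upwards [hwave, hXp.eventually hRη] with z hz hRz
  have hdη := hη.differentiable (by simp) (X z)
  apply isCovariantlyClosedAt_asymptoticForm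
    ((contDiff_pullback hX hη).differentiable (by simp) z)
  rw [fderiv_pullback_apply hX.contDiffAt hdη, fderiv_pullback_apply hX.contDiffAt hdη,
    fderiv_fderiv_apply_comm hX.contDiffAt (1, 0) (0, 1), hz]
  simp only [pullback, map_smul, hRz, ContinuousLinearMap.comp_apply, Complex.real_smul]
  push_cast
  ring

theorem exists_immersion_of_pullback {N F H : Type*} [NormedAddCommGroup N] [NormedSpace ℝ N]
    [CompleteSpace N] [HasContDiffBump M] [NormedAddCommGroup F] [InnerProductSpace ℝ F]
    [NormedAddCommGroup H] [InnerProductSpace ℝ H] {X : N → M} {z₀ : N} {D : N ≃L[ℝ] M}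
    (hX : ContDiff ℝ ∞ X) (hD : HasFDerivAt X (D : N →L[ℝ] M) z₀) {θ : M → M →L[ℝ] F}
    {W : N → H} (hW : ContDiff ℝ ∞ W) (h : ∀ᶠ z in 𝓝 z₀, ∀ v w,
      ⟪fderiv ℝ W z v, fderiv ℝ W z w⟫_ℝ = ⟪pullback X θ z v, pullback X θ z w⟫_ℝ) :
    ∃ V : M → H, ContDiff ℝ ∞ V ∧
      ∀ᶠ x in 𝓝 (X z₀), ∀ v w, ⟪fderiv ℝ V x v, fderiv ℝ V x w⟫_ℝ = ⟪θ x v, θ x w⟫_ℝ := by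
  obtain ⟨Y, hYz₀, hY, -⟩ := exists_smooth_localInverse hX hD
  obtain ⟨V, hV, hVY⟩ := exists_contDiff_eventuallyEq (f := fun x => W (Y x))
    (hY.mono fun x hx => hW.contDiffAt.comp x hx.1)
  refine ⟨V, hV, ?_⟩
  have hYtendsto : Tendsto Y (𝓝 (X z₀)) (𝓝 z₀) := by
    simpa only [hYz₀] using hY.self_of_nhds.1.continuousAt.tendsto
  filter_upwards [hVY.eventuallyEq_nhds, hY.eventually_nhds, hYtendsto.eventually h]
    with x hVx hYx hWx v w
  have hdY := (hYx.self_of_nhds.1.differentiableAt (by simp)).hasFDerivAt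
  have hdV (u : M) : fderiv ℝ V x u = fderiv ℝ W (Y x) (fderiv ℝ Y x u) := by
    rw [(((hW.differentiable (by simp) _).hasFDerivAt.comp x hdY).congr_of_eventuallyEq hVx).fderiv,
      ContinuousLinearMap.comp_apply]
  have hinv (u : M) : fderiv ℝ X (Y x) (fderiv ℝ Y x u) = u := by
    have hid : X ∘ Y =ᶠ[𝓝 x] id := hYx.mono fun y hy => hy.2
    have hcomp := (hX.differentiable (by simp) (Y x)).hasFDerivAt.comp x hdY
    exact DFunLike.congr_fun (hcomp.unique ((hasFDerivAt_id x).congr_of_eventuallyEq hid)) u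
  have hXY : X (Y x) = x := hYx.self_of_nhds.2
  rw [hdV, hdV, hWx, pullback, ContinuousLinearMap.comp_apply, ContinuousLinearMap.comp_apply,
    hinv, hinv, hXY]

theorem exists_immersion_of_negative_curvature {θ : M → M →L[ℝ] ℂ}
    {φ : M → M →L[ℝ] ℝ} {k : M → ℝ} {p : M} (hθ : ContDiff ℝ ∞ θ) (hφ : ContDiff ℝ ∞ φ)
    (hk : ContDiff ℝ ∞ k) (e : M ≃L[ℝ] ℂ) (hθp : θ p = e) (hkp : k p ≠ 0)
    (htorsion : ∀ᶠ x in 𝓝 p, IsCovariantlyClosedAt φ θ x)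
    (hcurvature : ∀ᶠ x in 𝓝 p, ∀ v w, extd φ x v w = k x ^ 2 * (conj (θ x v) * θ x w).im) :
    ∃ V : M → PlaneLine, ContDiff ℝ ∞ V ∧
      ∀ᶠ x in 𝓝 p, ∀ v w, ⟪fderiv ℝ V x v, fderiv ℝ V x w⟫_ℝ = ⟪θ x v, θ x w⟫_ℝ := by
  have := e.symm.toLinearEquiv.finiteDimensional
  let η : M → M →L[ℝ] ℂ := fun x => k x • θ x
  have hη : ContDiff ℝ ∞ η := hk.smul hθ
  obtain ⟨X, D, hX, rfl, hD, hcodazzi⟩ := exists_asymptotic_coordinates (p := p) hη hφ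
    (e.trans (ContinuousLinearEquiv.smulLeft (Units.mk0 (k p) hkp)))
    (by ext v; simp [η, hθp, Units.smul_def])
  have hXtendsto : Tendsto X (𝓝 0) (𝓝 (X 0)) := hX.continuous.continuousAt
  obtain ⟨W, hW, hWθ⟩ := exists_immersion_of_gauss_codazzi (contDiff_pullback hX hθ)
    (contDiff_asymptoticForm (contDiff_pullback hX hη)) (contDiff_pullback hX hφ)
    ((hXtendsto.eventually htorsion).mono fun z hz =>
      hz.pullback hX.contDiffAt (hθ.differentiable (by simp) _))
    hcodazzi
    (by
      filter_upwards [hXtendsto.eventually hcurvature] with z hz v w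
      rw [extd_pullback hX.contDiffAt (hφ.differentiable (by simp) _), hz,
        im_conj_asymptoticForm_mul]
      simp [pullback, η]
      ring)
    (.of_forall fun z v w => inner_asymptoticForm_comm (c := k (X z)) rfl v w)
  exact exists_immersion_of_pullback hX hD hW hWθ

end AsymptoticCoordinates

/-! ### Gauss curvature of a surface metric -/

section PartialDeriv

variable {F : Type*} [NormedAddCommGroup F] [NormedSpace ℝ F]

/-- The partial derivative of `f` in the `i`-th coordinate direction of the plane. -/
def partialDeriv (i : Fin 2) (f : E2 → F) (z : E2) : F :=
  fderiv ℝ f z (EuclideanSpace.single i 1)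

theorem contDiff_partialDeriv {f : E2 → F} (hf : ContDiff ℝ ∞ f) (i : Fin 2) :
    ContDiff ℝ ∞ (partialDeriv i f) :=
  (hf.fderiv_right (by simp)).clm_apply contDiff_const

theorem partialDeriv_congr {f g : E2 → F} {p : E2} (h : f =ᶠ[𝓝 p] g) (i : Fin 2) :
    partialDeriv i f =ᶠ[𝓝 p] partialDeriv i g :=
  h.eventuallyEq_nhds.mono fun z hz => by rw [partialDeriv, partialDeriv, hz.fderiv_eq]

theorem partialDeriv_comm {f : E2 → F} (hf : ContDiff ℝ ∞ f) (i j : Fin 2) (z : E2) :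
    partialDeriv i (partialDeriv j f) z = partialDeriv j (partialDeriv i f) z :=
  fderiv_fderiv_apply_comm hf.contDiffAt _ _

theorem partialDeriv_sub {f g : E2 → F} {z : E2} (hf : DifferentiableAt ℝ f z)
    (hg : DifferentiableAt ℝ g z) (i : Fin 2) :
    partialDeriv i (fun y => f y - g y) z = partialDeriv i f z - partialDeriv i g z := by
  rw [partialDeriv, fderiv_fun_sub hf hg]
  rfl

theorem partialDeriv_add {f g : E2 → F} {z : E2} (hf : DifferentiableAt ℝ f z)
    (hg : DifferentiableAt ℝ g z) (i : Fin 2) :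
    partialDeriv i (fun y => f y + g y) z = partialDeriv i f z + partialDeriv i g z := by
  rw [partialDeriv, fderiv_fun_add hf hg]
  rfl

theorem partialDeriv_smul {c : E2 → ℝ} {f : E2 → F} {z : E2} (hc : DifferentiableAt ℝ c z)
    (hf : DifferentiableAt ℝ f z) (i : Fin 2) :
    partialDeriv i (fun y => c y • f y) z =
      partialDeriv i c z • f z + c z • partialDeriv i f z := by
  rw [partialDeriv, fderiv_fun_smul hc hf, add_comm]
  rfl

end PartialDeriv

section Brioschi

open ComplexConjugate

/-- The covariant derivative, in the `i`-th coordinate direction, of the vector field whose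
components in an orthonormal frame with connection form `φ` are given by `ξ`. -/
def covDeriv (φ : E2 → E2 →L[ℝ] ℝ) (i : Fin 2) (ξ : E2 → ℂ) (z : E2) : ℂ :=
  partialDeriv i ξ z + φ z (EuclideanSpace.single i 1) • (Complex.I * ξ z)

theorem contDiff_covDeriv {φ : E2 → E2 →L[ℝ] ℝ} {ξ : E2 → ℂ} (hφ : ContDiff ℝ ∞ φ)
    (hξ : ContDiff ℝ ∞ ξ) (i : Fin 2) : ContDiff ℝ ∞ (covDeriv φ i ξ) :=
  (contDiff_partialDeriv hξ i).add ((hφ.clm_apply contDiff_const).smul (contDiff_const.mul hξ))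

theorem partialDeriv_inner_eq_covDeriv {φ : E2 → E2 →L[ℝ] ℝ} {ξ ζ : E2 → ℂ} {z : E2}
    (hξ : DifferentiableAt ℝ ξ z) (hζ : DifferentiableAt ℝ ζ z) (i : Fin 2) :
    partialDeriv i (fun y => ⟪ξ y, ζ y⟫_ℝ) z =
      ⟪covDeriv φ i ξ z, ζ z⟫_ℝ + ⟪ξ z, covDeriv φ i ζ z⟫_ℝ := by
  rw [partialDeriv, fderiv_inner_apply ℝ hξ hζ]
  simp [covDeriv, partialDeriv, Complex.inner]
  ring

theorem partialDeriv_partialDeriv_inner {φ : E2 → E2 →L[ℝ] ℝ} {ξ ζ : E2 → ℂ}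
    (hφ : ContDiff ℝ ∞ φ) (hξ : ContDiff ℝ ∞ ξ) (hζ : ContDiff ℝ ∞ ζ) (i j : Fin 2) (z : E2) :
    partialDeriv i (partialDeriv j fun y => ⟪ξ y, ζ y⟫_ℝ) z =
      ⟪covDeriv φ i (covDeriv φ j ξ) z, ζ z⟫_ℝ + ⟪covDeriv φ j ξ z, covDeriv φ i ζ z⟫_ℝ +
        (⟪covDeriv φ i ξ z, covDeriv φ j ζ z⟫_ℝ + ⟪ξ z, covDeriv φ i (covDeriv φ j ζ) z⟫_ℝ) := by
  have hdiff {f : E2 → ℂ} (hf : ContDiff ℝ ∞ f) (y : E2) : DifferentiableAt ℝ f y :=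
    hf.differentiable (by simp) y
  have hξ' := contDiff_covDeriv hφ hξ j
  have hζ' := contDiff_covDeriv hφ hζ j
  rw [funext fun y => partialDeriv_inner_eq_covDeriv (φ := φ) (hdiff hξ y) (hdiff hζ y) j,
    partialDeriv_add ((hdiff hξ' z).inner ℝ (hdiff hζ z)) ((hdiff hξ z).inner ℝ (hdiff hζ' z)),
    partialDeriv_inner_eq_covDeriv (hdiff hξ' z) (hdiff hζ z),
    partialDeriv_inner_eq_covDeriv (hdiff hξ z) (hdiff hζ' z)]

theorem covDeriv_congr {φ : E2 → E2 →L[ℝ] ℝ} {ξ ζ : E2 → ℂ} {z : E2} (h : ξ =ᶠ[𝓝 z] ζ)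
    (i : Fin 2) : covDeriv φ i ξ z = covDeriv φ i ζ z := by
  rw [covDeriv, covDeriv, (partialDeriv_congr h i).eq_of_nhds, h.eq_of_nhds]

theorem partialDeriv_covDeriv {φ : E2 → E2 →L[ℝ] ℝ} {ξ : E2 → ℂ} (hφ : ContDiff ℝ ∞ φ)
    (hξ : ContDiff ℝ ∞ ξ) (i j : Fin 2) (z : E2) :
    partialDeriv i (covDeriv φ j ξ) z = partialDeriv i (partialDeriv j ξ) z +
      (fderiv ℝ φ z (EuclideanSpace.single i 1) (EuclideanSpace.single j 1) • (Complex.I * ξ z) +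
        φ z (EuclideanSpace.single j 1) • (Complex.I * partialDeriv i ξ z)) := by
  have hξ' := hξ.differentiable (by simp) z
  have hφ' := hφ.differentiable (by simp) z
  have hφj : DifferentiableAt ℝ (fun y => φ y (EuclideanSpace.single j 1)) z :=
    hφ'.clm_apply (differentiableAt_const _)
  have hiξ : DifferentiableAt ℝ (fun y => Complex.I * ξ y) z := hξ'.const_mul Complex.I
  unfold covDeriv
  rw [partialDeriv_add ((contDiff_partialDeriv hξ j).differentiable (by simp) z)
    (hφj.fun_smul hiξ), partialDeriv_smul hφj hiξ]
  simp [partialDeriv, fderiv_const_mul hξ', fderiv_clm_apply hφ' (differentiableAt_const _)]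

theorem covDeriv_covDeriv_sub {φ : E2 → E2 →L[ℝ] ℝ} {ξ : E2 → ℂ} (hφ : ContDiff ℝ ∞ φ)
    (hξ : ContDiff ℝ ∞ ξ) (i j : Fin 2) (z : E2) :
    covDeriv φ i (covDeriv φ j ξ) z - covDeriv φ j (covDeriv φ i ξ) z =
      Complex.I * extd φ z (EuclideanSpace.single i 1) (EuclideanSpace.single j 1) * ξ z := by
  have hcomm := partialDeriv_comm hξ i j z
  change partialDeriv i (covDeriv φ j ξ) z + _ - (partialDeriv j (covDeriv φ i ξ) z + _) = _
  rw [partialDeriv_covDeriv hφ hξ, partialDeriv_covDeriv hφ hξ, extd]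
  simp only [covDeriv, Complex.real_smul]
  push_cast
  linear_combination hcomm

/-- Brioschi's determinantal expression `K (E G - F²)²` for the Gauss curvature `K` of the metric
`g = !![E, F; F, G]`. -/
def brioschi (g : E2 → Matrix (Fin 2) (Fin 2) ℝ) (z : E2) : ℝ :=
  let E := fun y => g y 0 0
  let F := fun y => g y 0 1
  let G := fun y => g y 1 1
  let E₁ := partialDeriv 0 E
  let E₂ := partialDeriv 1 E
  let F₁ := partialDeriv 0 F
  let F₂ := partialDeriv 1 F
  let G₁ := partialDeriv 0 G
  let G₂ := partialDeriv 1 G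
  !![-partialDeriv 1 E₂ z / 2 + partialDeriv 1 F₁ z - partialDeriv 0 G₁ z / 2,
      E₁ z / 2, F₁ z - E₂ z / 2;
    F₂ z - G₁ z / 2, E z, F z;
    G₂ z / 2, F z, G z].det -
  !![0, E₂ z / 2, G₁ z / 2;
    E₂ z / 2, E z, F z;
    G₁ z / 2, F z, G z].det

theorem brioschi_congr {g g' : E2 → Matrix (Fin 2) (Fin 2) ℝ} {p : E2} (h : g =ᶠ[𝓝 p] g') :
    brioschi g p = brioschi g' p := by
  have hentry (i j : Fin 2) : (fun y => g y i j) =ᶠ[𝓝 p] fun y => g' y i j :=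
    h.fun_comp fun A => A i j
  have hpartial (k i j : Fin 2) := partialDeriv_congr (hentry i j) k
  simp only [brioschi, h.eq_of_nhds, (hpartial _ _ _).eq_of_nhds,
    (partialDeriv_congr (hpartial _ _ _) _).eq_of_nhds]

/-- The components of the one-form `α` in the coordinate coframe of the plane. -/
def component {F : Type*} [NormedAddCommGroup F] [NormedSpace ℝ F] (α : E2 → E2 →L[ℝ] F)
    (i : Fin 2) (z : E2) : F :=
  α z (EuclideanSpace.single i 1)

/-- The metric for which the `ℂ`-valued one-form `θ` is an orthonormal coframe. -/
def coframeMetric (θ : E2 → E2 →L[ℝ] ℂ) (z : E2) : Matrix (Fin 2) (Fin 2) ℝ :=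
  gram ℝ fun i => component θ i z

/-- The area form of the orthonormal coframe `θ`, as a multiple of the coordinate area form. -/
def areaDensity (θ : E2 → E2 →L[ℝ] ℂ) (z : E2) : ℝ :=
  (conj (component θ 0 z) * component θ 1 z).im

section

variable {θ : E2 → E2 →L[ℝ] ℂ} {φ : E2 → E2 →L[ℝ] ℝ} {p : E2}

theorem contDiff_component (hθ : ContDiff ℝ ∞ θ) (i : Fin 2) : ContDiff ℝ ∞ (component θ i) :=
  hθ.clm_apply contDiff_const

theorem covDeriv_component_comm (hθ : DifferentiableAt ℝ θ p) (h : IsCovariantlyClosedAt φ θ p)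
    (i j : Fin 2) :
    covDeriv φ i (component θ j) p = covDeriv φ j (component θ i) p := by
  have hij : partialDeriv i (component θ j) p - partialDeriv j (component θ i) p = _ :=
    (extd_apply_eq hθ _ _).symm.trans (h _ _)
  simp only [covDeriv, component, Complex.real_smul]
  linear_combination hij

theorem partialDeriv_coframeMetric (hθ : ContDiff ℝ ∞ θ) (k i j : Fin 2) :
    partialDeriv k (fun y => coframeMetric θ y i j) p =
      ⟪covDeriv φ k (component θ i) p, component θ j p⟫_ℝ +
        ⟪component θ i p, covDeriv φ k (component θ j) p⟫_ℝ :=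
  partialDeriv_inner_eq_covDeriv ((contDiff_component hθ i).differentiable (by simp) p)
    ((contDiff_component hθ j).differentiable (by simp) p) k

theorem partialDeriv_partialDeriv_coframeMetric (hθ : ContDiff ℝ ∞ θ) (hφ : ContDiff ℝ ∞ φ)
    (hsymm : covDeriv φ 1 (component θ 0) =ᶠ[𝓝 p] covDeriv φ 0 (component θ 1)) :
    -partialDeriv 1 (partialDeriv 1 fun y => coframeMetric θ y 0 0) p / 2 +
        partialDeriv 1 (partialDeriv 0 fun y => coframeMetric θ y 0 1) p -
        partialDeriv 0 (partialDeriv 0 fun y => coframeMetric θ y 1 1) p / 2 =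
      -extd φ p (EuclideanSpace.single 0 1) (EuclideanSpace.single 1 1) * areaDensity θ p +
        ⟪covDeriv φ 0 (component θ 0) p, covDeriv φ 1 (component θ 1) p⟫_ℝ -
        ⟪covDeriv φ 0 (component θ 1) p, covDeriv φ 0 (component θ 1) p⟫_ℝ := by
  have hsecond (k l i j : Fin 2) :
      partialDeriv k (partialDeriv l fun y => coframeMetric θ y i j) p = _ :=
    partialDeriv_partialDeriv_inner hφ (contDiff_component hθ i) (contDiff_component hθ j) k l p
  have hricci : ⟪covDeriv φ 1 (covDeriv φ 0 (component θ 0)) p, component θ 1 p⟫_ℝ -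
      ⟪covDeriv φ 0 (covDeriv φ 1 (component θ 0)) p, component θ 1 p⟫_ℝ =
      -extd φ p (EuclideanSpace.single 0 1) (EuclideanSpace.single 1 1) * areaDensity θ p := by
    rw [← inner_sub_left, covDeriv_covDeriv_sub hφ (contDiff_component hθ 0)]
    simp [areaDensity, extd, Complex.inner]
    ring
  rw [hsecond, hsecond, hsecond, covDeriv_congr hsymm, ← covDeriv_congr hsymm 0, ← hricci,
    hsymm.eq_of_nhds, real_inner_comm (component θ 0 p),
    real_inner_comm (covDeriv φ 0 (covDeriv φ 1 (component θ 0)) p)]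
  ring

-- Three vectors in a plane have vanishing Gram determinant.
theorem det_add_inner_sub_det_inner (t : ℝ) (a b c ξ ζ : ℂ) :
    !![t + ⟪a, c⟫_ℝ - ⟪b, b⟫_ℝ, ⟪a, ξ⟫_ℝ, ⟪a, ζ⟫_ℝ;
      ⟪c, ξ⟫_ℝ, ⟪ξ, ξ⟫_ℝ, ⟪ξ, ζ⟫_ℝ;
      ⟪c, ζ⟫_ℝ, ⟪ξ, ζ⟫_ℝ, ⟪ζ, ζ⟫_ℝ].det -
    !![0, ⟪b, ξ⟫_ℝ, ⟪b, ζ⟫_ℝ;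
      ⟪b, ξ⟫_ℝ, ⟪ξ, ξ⟫_ℝ, ⟪ξ, ζ⟫_ℝ;
      ⟪b, ζ⟫_ℝ, ⟪ξ, ζ⟫_ℝ, ⟪ζ, ζ⟫_ℝ].det = t * (conj ξ * ζ).im ^ 2 := by
  simp only [Complex.inner, Complex.mul_re, Complex.mul_im, Complex.conj_re, Complex.conj_im]
  simp [det_fin_three]
  ring

theorem brioschi_coframeMetric (hθ : ContDiff ℝ ∞ θ) (hφ : ContDiff ℝ ∞ φ)
    (htorsion : ∀ᶠ z in 𝓝 p, IsCovariantlyClosedAt φ θ z) :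
    brioschi (coframeMetric θ) p =
      -extd φ p (EuclideanSpace.single 0 1) (EuclideanSpace.single 1 1) * areaDensity θ p ^ 3 := by
  let K := extd φ p (EuclideanSpace.single 0 1) (EuclideanSpace.single 1 1)
  let s (i j : Fin 2) := covDeriv φ i (component θ j) p
  have hsymm : covDeriv φ 1 (component θ 0) =ᶠ[𝓝 p] covDeriv φ 0 (component θ 1) :=
    htorsion.mono fun z hz => covDeriv_component_comm (hθ.differentiable (by simp) z) hz 1 0
  have hdiag (k i : Fin 2) : partialDeriv k (fun y => coframeMetric θ y i i) p / 2 =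
      ⟪s k i, component θ i p⟫_ℝ := by
    rw [partialDeriv_coframeMetric (φ := φ) hθ, real_inner_comm (s k i), add_self_div_two]
  have hE₂ := hdiag 1 0
  rw [show s 1 0 = s 0 1 from hsymm.eq_of_nhds] at hE₂
  have hF₁ : partialDeriv 0 (fun y => coframeMetric θ y 0 1) p -
      partialDeriv 1 (fun y => coframeMetric θ y 0 0) p / 2 = ⟪s 0 0, component θ 1 p⟫_ℝ := by
    rw [partialDeriv_coframeMetric (φ := φ) hθ, hE₂, real_inner_comm (s 0 1), add_sub_cancel_right]
  have hF₂ : partialDeriv 1 (fun y => coframeMetric θ y 0 1) p -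
      partialDeriv 0 (fun y => coframeMetric θ y 1 1) p / 2 = ⟪s 1 1, component θ 0 p⟫_ℝ := by
    rw [partialDeriv_coframeMetric (φ := φ) hθ, hdiag, hsymm.eq_of_nhds, add_sub_cancel_left,
      real_inner_comm]
  calc brioschi (coframeMetric θ) p
    _ = -K * areaDensity θ p * areaDensity θ p ^ 2 := by
      rw [areaDensity, ← det_add_inner_sub_det_inner _ (s 0 0) (s 0 1) (s 1 1) _ _, ← areaDensity,
        ← partialDeriv_partialDeriv_coframeMetric hθ hφ hsymm, ← hdiag 0 0, ← hE₂, ← hdiag 0 1,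
        ← hdiag 1 1, ← hF₁, ← hF₂]
      rfl
    _ = -K * areaDensity θ p ^ 3 := by ring

end

end Brioschi

/-! ### Immersions of negatively curved metrics -/

section Coframe

open ComplexConjugate

theorem exists_contDiff_sq_eventuallyEq {E : Type*} [NormedAddCommGroup E] [NormedSpace ℝ E]
    [HasContDiffBump E] {f : E → ℝ} {x : E} (hf : ∀ᶠ y in 𝓝 x, ContDiffAt ℝ ∞ f y)
    (hx : 0 < f x) :
    ∃ k : E → ℝ, ContDiff ℝ ∞ k ∧ k x ≠ 0 ∧ ∀ᶠ y in 𝓝 x, k y ^ 2 = f y := by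
  have hpos : ∀ᶠ y in 𝓝 x, 0 < f y := hf.self_of_nhds.continuousAt.eventually_const_lt hx
  obtain ⟨k, hk, hkf⟩ := exists_contDiff_eventuallyEq (f := fun y => √(f y))
    (hf.and hpos |>.mono fun y hy => hy.1.sqrt hy.2.ne')
  refine ⟨k, hk, ?_, ?_⟩
  · rw [hkf.eq_of_nhds]
    exact (Real.sqrt_pos.2 hx).ne'
  · filter_upwards [hkf, hpos] with y hky hy
    rw [hky, Real.sq_sqrt hy.le]

theorem contDiff_areaDensity {θ : E2 → E2 →L[ℝ] ℂ} (hθ : ContDiff ℝ ∞ θ) :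
    ContDiff ℝ ∞ (areaDensity θ) :=
  Complex.imCLM.contDiff.comp
    ((Complex.conjCLE.contDiff.comp (contDiff_component hθ 0)).mul (contDiff_component hθ 1))

theorem areaDensity_sq (θ : E2 → E2 →L[ℝ] ℂ) (z : E2) :
    areaDensity θ z ^ 2 = (coframeMetric θ z).det := by
  simp only [areaDensity, coframeMetric, det_fin_two, gram_apply, Complex.inner, Complex.mul_re,
    Complex.mul_im, Complex.conj_re, Complex.conj_im]
  ring

theorem exists_leviCivita_connection {θ : E2 → E2 →L[ℝ] ℂ} {p : E2} (hθ : ContDiff ℝ ∞ θ)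
    (hp : areaDensity θ p ≠ 0) :
    ∃ φ : E2 → E2 →L[ℝ] ℝ, ContDiff ℝ ∞ φ ∧ ∀ᶠ z in 𝓝 p, IsCovariantlyClosedAt φ θ z := by
  let τ (z : E2) : ℂ := extd θ z (EuclideanSpace.single 0 1) (EuclideanSpace.single 1 1)
  have hτ : ContDiff ℝ ∞ τ := contDiff_extd_apply hθ _ _
  have hne : ∀ᶠ z in 𝓝 p, areaDensity θ z ≠ 0 :=
    (contDiff_areaDensity hθ).continuous.continuousAt.eventually_ne hp
  obtain ⟨φ, hφ, hφθ⟩ := exists_contDiff_eventuallyEq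
    (f := fun z => (areaDensity θ z)⁻¹ • innerSL ℝ (τ z) ∘L θ z) <| hne.mono fun z hz =>
      ((contDiff_areaDensity hθ).contDiffAt.inv hz).smul
        (((innerSL ℝ).contDiff.comp hτ).clm_comp hθ).contDiffAt
  refine ⟨φ, hφ, ?_⟩
  filter_upwards [hne, hφθ] with z hz hφz
  refine isCovariantlyClosedAt_of_basis (EuclideanSpace.basisFun (Fin 2) ℝ).toBasis ?_
  have hφ' (v : E2) : φ z v = (areaDensity θ z)⁻¹ * ⟪τ z, θ z v⟫_ℝ := by rw [hφz]; rfl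
  have hscaled : areaDensity θ z * τ z = -Complex.I *
      (⟪τ z, component θ 0 z⟫_ℝ * component θ 1 z -
        ⟪τ z, component θ 1 z⟫_ℝ * component θ 0 z) := by
    simp only [areaDensity, Complex.inner]
    apply Complex.ext <;> simp <;> ring
  simp only [OrthonormalBasis.coe_toBasis, EuclideanSpace.basisFun_apply, hφ']
  calc τ z
    _ = (areaDensity θ z : ℂ)⁻¹ * (areaDensity θ z * τ z) :=
      (inv_mul_cancel_left₀ (Complex.ofReal_ne_zero.2 hz) _).symm
    _ = _ := by
      rw [hscaled]
      push_cast
      simp only [component]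
      ring

theorem injective_of_posDef_gram {H : Type*} [NormedAddCommGroup H] [InnerProductSpace ℝ H]
    {L : E2 →L[ℝ] H} (hL : (gram ℝ fun i => L (EuclideanSpace.single i 1)).PosDef) :
    Function.Injective L := by
  refine (injective_iff_map_eq_zero L).2 fun x hx => ?_
  have hind := linearIndependent_of_posDef_gram hL
  have hsum : ∑ i, x i • L (EuclideanSpace.single i 1) = 0 := by
    simp only [← map_smul, ← map_sum, ← hx]
    exact congrArg L (by simpa using (EuclideanSpace.basisFun (Fin 2) ℝ).sum_repr x)
  ext i
  exact Fintype.linearIndependent_iff.1 hind x hsum i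

/-- The orthonormal coframe, with first component real, that the Cholesky decomposition
associates with the inner product `A` on the plane. -/
def choleskyCoframe (A : Matrix (Fin 2) (Fin 2) ℝ) : E2 →L[ℝ] ℂ :=
  √(A 0 0) • (EuclideanSpace.proj 0 : E2 →L[ℝ] ℝ).smulRight 1 +
    (EuclideanSpace.proj 1 : E2 →L[ℝ] ℝ).smulRight
      ((A 0 1 / √(A 0 0)) • 1 + √(A.det / A 0 0) • Complex.I)

theorem gram_choleskyCoframe {A : Matrix (Fin 2) (Fin 2) ℝ} (hA : A.IsSymm) (hpos : 0 < A 0 0)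
    (hdet : 0 < A.det) : gram ℝ (fun i => choleskyCoframe A (EuclideanSpace.single i 1)) = A := by
  have h10 : A 1 0 = A 0 1 := hA.apply 0 1
  have hsqrt : √(A 0 0) ≠ 0 := (Real.sqrt_pos.2 hpos).ne'
  have hdet' : A.det = A 0 0 * A 1 1 - A 0 1 ^ 2 := by rw [det_fin_two, h10, sq]
  have h00 : choleskyCoframe A (EuclideanSpace.single 0 1) = √(A 0 0) := by
    simp [choleskyCoframe]
  have h11 : choleskyCoframe A (EuclideanSpace.single 1 1) =
      ⟨A 0 1 / √(A 0 0), √(A.det / A 0 0)⟩ := by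
    apply Complex.ext <;> simp [choleskyCoframe]
  have hnorm : (A 0 1 / √(A 0 0)) ^ 2 + √(A.det / A 0 0) ^ 2 = A 1 1 := by
    rw [div_pow, Real.sq_sqrt hpos.le, Real.sq_sqrt (by positivity), ← add_div, hdet',
      add_sub_cancel, mul_div_cancel_left₀ _ hpos.ne']
  ext i j
  fin_cases i <;> fin_cases j
  · simpa [gram_apply, h00] using Real.sq_sqrt hpos.le
  · simpa [gram_apply, h00, h11, Complex.inner] using div_mul_cancel₀ (A 0 1) hsqrt
  · simpa [gram_apply, h00, h11, Complex.inner, h10] using mul_div_cancel₀ (A 0 1) hsqrt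
  · simpa [gram_apply, h11, Complex.sq_norm, Complex.normSq_apply, ← sq] using hnorm

theorem contDiffAt_choleskyCoframe {A : Matrix (Fin 2) (Fin 2) ℝ} (hpos : 0 < A 0 0)
    (hdet : 0 < A.det) : ContDiffAt ℝ ∞ choleskyCoframe A := by
  have hentry (i j : Fin 2) : ContDiffAt ℝ ∞ (fun B : Matrix (Fin 2) (Fin 2) ℝ => B i j) A :=
    (contDiff_apply_apply ℝ ℝ i j).contDiffAt
  have hdet' : ContDiffAt ℝ ∞ (fun B : Matrix (Fin 2) (Fin 2) ℝ => B.det) A := by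
    simp only [det_fin_two]
    exact ((hentry 0 0).mul (hentry 1 1)).sub ((hentry 0 1).mul (hentry 1 0))
  have hsqrt : ContDiffAt ℝ ∞ (fun B : Matrix (Fin 2) (Fin 2) ℝ => √(B 0 0)) A :=
    (hentry 0 0).sqrt hpos.ne'
  have hsqrt' : ContDiffAt ℝ ∞ (fun B : Matrix (Fin 2) (Fin 2) ℝ => √(B.det / B 0 0)) A :=
    (hdet'.div (hentry 0 0) hpos.ne').sqrt (div_pos hdet hpos).ne'
  have hquot := (hentry 0 1).div hsqrt (Real.sqrt_pos.2 hpos).ne'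
  exact (hsqrt.smul contDiffAt_const).add <| contDiffAt_const.smulRight <|
    (hquot.smul contDiffAt_const).add (hsqrt'.smul contDiffAt_const)

theorem exists_coframe {g : E2 → Matrix (Fin 2) (Fin 2) ℝ} {p : E2} (hg : ContDiff ℝ ∞ g)
    (hsymm : ∀ᶠ z in 𝓝 p, (g z).IsSymm) (hp : (g p).PosDef) :
    ∃ θ : E2 → E2 →L[ℝ] ℂ, ContDiff ℝ ∞ θ ∧ coframeMetric θ =ᶠ[𝓝 p] g := by
  have hpos : ∀ᶠ z in 𝓝 p, 0 < g z 0 0 :=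
    (hg.continuous.matrix_elem 0 0).continuousAt.eventually_const_lt hp.diag_pos
  have hdet : ∀ᶠ z in 𝓝 p, 0 < (g z).det :=
    hg.continuous.matrix_det.continuousAt.eventually_const_lt hp.det_pos
  obtain ⟨θ, hθ, hθg⟩ := exists_contDiff_eventuallyEq (f := fun z => choleskyCoframe (g z))
    (hpos.and hdet |>.mono fun z hz =>
      (contDiffAt_choleskyCoframe hz.1 hz.2).comp z hg.contDiffAt)
  refine ⟨θ, hθ, ?_⟩
  filter_upwards [hpos, hdet, hsymm, hθg] with z hposz hdetz hsymmz hθz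
  simp only [coframeMetric, component, hθz, gram_choleskyCoframe hsymmz hposz hdetz]

theorem im_conj_mul_eq_areaDensity (θ : E2 → E2 →L[ℝ] ℂ) (z v w : E2) :
    (conj (θ z v) * θ z w).im = (v 0 * w 1 - v 1 * w 0) * areaDensity θ z := by
  have hsum (v : E2) : θ z v = v 0 • component θ 0 z + v 1 • component θ 1 z := by
    conv_lhs => rw [← (EuclideanSpace.basisFun (Fin 2) ℝ).sum_repr v]
    simp [component]
  rw [hsum v, hsum w, areaDensity]
  simp
  ring

/-- The metric induced on the plane by the map `u`. -/
def firstFundamentalForm {H : Type*} [NormedAddCommGroup H] [InnerProductSpace ℝ H] (u : E2 → H)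
    (z : E2) : Matrix (Fin 2) (Fin 2) ℝ :=
  gram ℝ fun i => partialDeriv i u z

theorem exists_immersion_of_brioschi_neg {g : E2 → Matrix (Fin 2) (Fin 2) ℝ} {p : E2}
    (hg : ContDiff ℝ ∞ g) (hsymm : ∀ᶠ z in 𝓝 p, (g z).IsSymm) (hp : (g p).PosDef)
    (hneg : brioschi g p < 0) :
    ∃ V : E2 → PlaneLine, ContDiff ℝ ∞ V ∧ firstFundamentalForm V =ᶠ[𝓝 p] g := by
  obtain ⟨θ, hθ, hθg⟩ := exists_coframe hg hsymm hp
  have hθp : (coframeMetric θ p).PosDef := hθg.eq_of_nhds ▸ hp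
  have hJp : areaDensity θ p ≠ 0 := by
    rw [← sq_pos_iff, areaDensity_sq]
    exact hθp.det_pos
  obtain ⟨φ, hφ, htorsion⟩ := exists_leviCivita_connection hθ hJp
  let dφ z := extd φ z (EuclideanSpace.single 0 1) (EuclideanSpace.single 1 1)
  have hdφ : ContDiff ℝ ∞ dφ := contDiff_extd_apply hφ _ _
  have hJ := contDiff_areaDensity hθ
  have hJne : ∀ᶠ z in 𝓝 p, areaDensity θ z ≠ 0 := hJ.continuous.continuousAt.eventually_ne hJp
  have hκ : 0 < dφ p / areaDensity θ p := by
    rw [← brioschi_congr hθg, brioschi_coframeMetric hθ hφ htorsion] at hneg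
    have hquot : dφ p / areaDensity θ p = dφ p * areaDensity θ p ^ 3 / areaDensity θ p ^ 4 := by
      field_simp
    rw [hquot]
    exact div_pos (by linarith) (by positivity)
  obtain ⟨k, hk, hkp, hkκ⟩ := exists_contDiff_sq_eventuallyEq
    (hJne.mono fun z hz => hdφ.contDiffAt.div hJ.contDiffAt hz) hκ
  let e : E2 ≃L[ℝ] ℂ := (LinearEquiv.ofInjectiveOfFinrankEq (θ p).toLinearMap
    (injective_of_posDef_gram hθp) (by simp)).toContinuousLinearEquiv
  obtain ⟨V, hV, hVθ⟩ := exists_immersion_of_negative_curvature hθ hφ hk e rfl hkp htorsion <| by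
    filter_upwards [hkκ, hJne] with z hkz hJz v w
    rw [extd_eq_smul (EuclideanSpace.basisFun (Fin 2) ℝ).toBasis, hkz, im_conj_mul_eq_areaDensity]
    simp only [OrthonormalBasis.coe_toBasis_repr_apply, EuclideanSpace.basisFun_repr,
      OrthonormalBasis.coe_toBasis, EuclideanSpace.basisFun_apply, smul_eq_mul, Pi.div_apply, dφ]
    field_simp
  refine ⟨V, hV, .trans (hVθ.mono fun z hz => ?_) hθg⟩
  ext i j
  exact hz _ _

end Coframe

/-! ### The perturbation and the embedding -/

section Perturbation

variable {H : Type*} [NormedAddCommGroup H] [InnerProductSpace ℝ H] {f : E2 → ℝ}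
  {p : E2}

theorem contDiff_firstFundamentalForm {u : E2 → H} (hu : ContDiff ℝ ∞ u) :
    ContDiff ℝ ∞ (firstFundamentalForm u) :=
  contDiff_pi.2 fun i => contDiff_pi.2 fun j =>
    (contDiff_partialDeriv hu i).inner ℝ (contDiff_partialDeriv hu j)

theorem firstFundamentalForm_isSymm (u : E2 → H) (z : E2) :
    (firstFundamentalForm u z).IsSymm :=
  IsSymm.ext fun _ _ => real_inner_comm _ _

theorem firstFundamentalForm_eq_zero {u : E2 → H} {z : E2}
    (hu : ∀ i, partialDeriv i u z = 0) : firstFundamentalForm u z = 0 := by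
  ext i j
  simp [firstFundamentalForm, gram_apply, hu]

theorem partialDeriv_mul {a b : E2 → ℝ} (ha : ContDiff ℝ ∞ a) (hb : ContDiff ℝ ∞ b) (k : Fin 2) :
    partialDeriv k (fun z => a z * b z) =
      fun z => partialDeriv k a z * b z + a z * partialDeriv k b z :=
  funext fun z => partialDeriv_smul (ha.differentiable (by simp) z)
    (hb.differentiable (by simp) z) k

theorem partialDeriv_partialDeriv_mul_of_eq_zero {a b : E2 → ℝ} (ha : ContDiff ℝ ∞ a)
    (hb : ContDiff ℝ ∞ b) (hap : a p = 0) (hbp : b p = 0) (k l : Fin 2) :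
    partialDeriv k (partialDeriv l fun z => a z * b z) p =
      partialDeriv l a p * partialDeriv k b p + partialDeriv k a p * partialDeriv l b p := by
  have ha' := contDiff_partialDeriv ha l
  have hb' := contDiff_partialDeriv hb l
  rw [partialDeriv_mul ha hb, partialDeriv_add ((ha'.mul hb).differentiable (by simp) p)
    ((ha.mul hb').differentiable (by simp) p), partialDeriv_mul ha' hb, partialDeriv_mul ha hb']
  simp only [hap, hbp]
  ring

/-- The determinant of the Hessian of `f`. -/
def hessianDet (f : E2 → ℝ) (z : E2) : ℝ :=
  partialDeriv 0 (partialDeriv 0 f) z * partialDeriv 1 (partialDeriv 1 f) z -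
    partialDeriv 0 (partialDeriv 1 f) z ^ 2

theorem brioschi_sub_firstFundamentalForm {g : E2 → Matrix (Fin 2) (Fin 2) ℝ}
    (hg : ContDiff ℝ ∞ g) (hgp : (g p).IsSymm) (hf : ContDiff ℝ ∞ f)
    (hcrit : ∀ i, partialDeriv i f p = 0) :
    brioschi (fun z => g z - firstFundamentalForm f z) p =
      brioschi g p - hessianDet f p * (g p).det := by
  have hg' (i j : Fin 2) : ContDiff ℝ ∞ fun z => g z i j := contDiff_pi.1 (contDiff_pi.1 hg i) j
  have hf' := contDiff_partialDeriv hf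
  have hentry (i j : Fin 2) : (fun z => (g z - firstFundamentalForm f z) i j) =
      fun z => g z i j - partialDeriv i f z * partialDeriv j f z :=
    funext fun z => congrArg (g z i j - ·) (mul_comm _ _)
  have hpartial (k i j : Fin 2) :
      partialDeriv k (fun z => (g z - firstFundamentalForm f z) i j) =
        fun z => partialDeriv k (fun y => g y i j) z -
          partialDeriv k (fun y => partialDeriv i f y * partialDeriv j f y) z := by
    rw [hentry]
    exact funext fun z => partialDeriv_sub ((hg' i j).differentiable (by simp) z)
      (((hf' i).mul (hf' j)).differentiable (by simp) z) k
  have hfirst (k i j : Fin 2) : partialDeriv k (fun z => (g z - firstFundamentalForm f z) i j) p =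
      partialDeriv k (fun y => g y i j) p := by
    rw [hpartial, partialDeriv_mul (hf' i) (hf' j)]
    simp [hcrit]
  have hsecond (k l i j : Fin 2) :
      partialDeriv k (partialDeriv l fun z => (g z - firstFundamentalForm f z) i j) p =
        partialDeriv k (partialDeriv l fun y => g y i j) p -
          (partialDeriv l (partialDeriv i f) p * partialDeriv k (partialDeriv j f) p +
            partialDeriv k (partialDeriv i f) p * partialDeriv l (partialDeriv j f) p) := by
    rw [hpartial, partialDeriv_sub ((contDiff_partialDeriv (hg' i j) l).differentiable (by simp) p)
      ((contDiff_partialDeriv ((hf' i).mul (hf' j)) l).differentiable (by simp) p),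
      partialDeriv_partialDeriv_mul_of_eq_zero (hf' i) (hf' j) (hcrit i) (hcrit j)]
  have hg10 : g p 1 0 = g p 0 1 := hgp.apply 0 1
  simp only [brioschi, hsecond, hfirst, firstFundamentalForm_eq_zero hcrit, sub_zero,
    partialDeriv_comm hf 1 0, hessianDet, det_fin_two, hg10]
  simp [det_fin_three]
  ring

theorem partialDeriv_paraboloid (t : ℝ) (p : E2) (i : Fin 2) :
    partialDeriv i (fun z => t / 2 * ‖z - p‖ ^ 2) = fun z => t * (z i - p i) := by
  funext z
  have hnorm := ((hasFDerivAt_id z).sub_const p).norm_sq.const_mul (t / 2)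
  refine (DFunLike.congr_fun hnorm.fderiv _).trans ?_
  simp [EuclideanSpace.inner_single_right]
  ring

theorem partialDeriv_const_mul_coord_sub (t : ℝ) (p z : E2) (i j : Fin 2) :
    partialDeriv i (fun y : E2 => t * (y j - p j)) z = if i = j then t else 0 := by
  have hcoord := (((EuclideanSpace.proj j : E2 →L[ℝ] ℝ).hasFDerivAt (x := z)).sub_const
    (p j)).const_mul t
  refine (DFunLike.congr_fun (HasFDerivAt.fderiv hcoord) _).trans ?_
  simp [eq_comm]

theorem hessianDet_paraboloid (t : ℝ) (p z : E2) :
    hessianDet (fun z => t / 2 * ‖z - p‖ ^ 2) z = t ^ 2 := by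
  simp [hessianDet, partialDeriv_paraboloid, partialDeriv_const_mul_coord_sub, ← sq]

end Perturbation

theorem exists_firstFundamentalForm_eq_add {H H' : Type*} [NormedAddCommGroup H]
    [InnerProductSpace ℝ H] [FiniteDimensional ℝ H] [NormedAddCommGroup H']
    [InnerProductSpace ℝ H'] [FiniteDimensional ℝ H'] {n : ℕ}
    (hn : Module.finrank ℝ H + Module.finrank ℝ H' = n) {u : E2 → H} {v : E2 → H'}
    (hu : ContDiff ℝ ∞ u) (hv : ContDiff ℝ ∞ v) :
    ∃ w : E2 → EuclideanSpace ℝ (Fin n), ContDiff ℝ ∞ w ∧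
      ∀ z, firstFundamentalForm w z = firstFundamentalForm u z + firstFundamentalForm v z := by
  have hdim : Module.finrank ℝ (WithLp 2 (H × H')) = n := by
    rw [(WithLp.linearEquiv 2 ℝ (H × H')).finrank_eq, Module.finrank_prod, hn]
  let Λ : WithLp 2 (H × H') ≃ₗᵢ[ℝ] EuclideanSpace ℝ (Fin n) :=
    ((stdOrthonormalBasis ℝ _).reindex (finCongr hdim)).repr
  let L : H × H' →L[ℝ] EuclideanSpace ℝ (Fin n) :=
    (Λ : WithLp 2 (H × H') →L[ℝ] _) ∘L (WithLp.prodContinuousLinearEquiv 2 ℝ H H').symm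
  refine ⟨fun z => L (u z, v z), L.contDiff.comp (hu.prodMk hv), fun z => ?_⟩
  have hderiv (i : Fin 2) : partialDeriv i (fun z => L (u z, v z)) z =
      Λ (WithLp.toLp 2 (partialDeriv i u z, partialDeriv i v z)) :=
    DFunLike.congr_fun (L.hasFDerivAt.comp z
      ((hu.differentiable (by simp) z).hasFDerivAt.prodMk
        (hv.differentiable (by simp) z).hasFDerivAt)).fderiv _
  ext i j
  simp [firstFundamentalForm, gram_apply, hderiv, WithLp.prod_inner_apply]

theorem finrank_planeLine : Module.finrank ℝ PlaneLine = 3 := by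
  rw [(WithLp.linearEquiv 2 ℝ (ℂ × ℝ)).finrank_eq, Module.finrank_prod,
    Complex.finrank_real_complex, Module.finrank_self]

theorem exists_immersion_firstFundamentalForm_eq {g : E2 → Matrix (Fin 2) (Fin 2) ℝ} {p : E2}
    (hg : ContDiff ℝ ∞ g) (hsymm : ∀ᶠ z in 𝓝 p, (g z).IsSymm) (hp : (g p).PosDef) :
    ∃ u : E2 → EuclideanSpace ℝ (Fin 4), ContDiff ℝ ∞ u ∧ firstFundamentalForm u =ᶠ[𝓝 p] g := by
  obtain ⟨t, ht⟩ : ∃ t : ℝ, brioschi g p < t ^ 2 * (g p).det :=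
    ((tendsto_pow_atTop two_ne_zero).atTop_mul_const hp.det_pos
      |>.eventually_gt_atTop (brioschi g p)).exists
  let f : E2 → ℝ := fun z => t / 2 * ‖z - p‖ ^ 2
  have hf : ContDiff ℝ ∞ f := contDiff_const.mul ((contDiff_id.sub contDiff_const).norm_sq ℝ)
  have hcrit (i : Fin 2) : partialDeriv i f p = 0 :=
    (congrFun (partialDeriv_paraboloid t p i) p).trans (by simp)
  obtain ⟨V, hV, hVg⟩ := exists_immersion_of_brioschi_neg
    (g := fun z => g z - firstFundamentalForm f z) (p := p)
    (hg.sub (contDiff_firstFundamentalForm hf))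
    (hsymm.mono fun z hz => hz.sub (firstFundamentalForm_isSymm f z))
    (by rwa [firstFundamentalForm_eq_zero hcrit, sub_zero])
    (by
      rw [brioschi_sub_firstFundamentalForm hg hsymm.self_of_nhds hf hcrit, hessianDet_paraboloid]
      exact sub_neg.2 ht)
  obtain ⟨u, hu, huV⟩ := exists_firstFundamentalForm_eq_add (n := 4)
    (by rw [finrank_planeLine, Module.finrank_self]) hV hf
  exact ⟨u, hu, hVg.mono fun z hz => by rw [huV, hz, sub_add_cancel]⟩

theorem exists_mem_nhds_injOn {E F : Type*} [NormedAddCommGroup E] [NormedSpace ℝ E]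
    [FiniteDimensional ℝ E] [NormedAddCommGroup F] [NormedSpace ℝ F]
    {f : E → F} {f' : E →L[ℝ] F} {a : E} (hf : HasStrictFDerivAt f f' a)
    (hf' : Function.Injective f') : ∃ s ∈ 𝓝 a, InjOn f s := by
  obtain ⟨K, hK, hanti⟩ :=
    f'.toLinearMap.exists_antilipschitzWith (LinearMap.ker_eq_bot.2 hf')
  obtain ⟨s, hs, happrox⟩ := hf.approximates_deriv_on_nhds (c := (2 * K)⁻¹) (.inr (by positivity))
  refine ⟨s, hs, fun x hx y hy hxy => ?_⟩
  have hlower : ‖x - y‖ ≤ K * ‖f' x - f' y‖ := by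
    simpa [dist_eq_norm] using hanti.le_mul_dist x y
  have hupper : ‖f' x - f' y‖ ≤ (2 * K : ℝ)⁻¹ * ‖x - y‖ := by
    rw [norm_sub_rev]
    simpa [hxy] using happrox x hx y hy
  have hcontract : ‖x - y‖ ≤ 2⁻¹ * ‖x - y‖ :=
    calc ‖x - y‖
      _ ≤ K * ((2 * K : ℝ)⁻¹ * ‖x - y‖) := hlower.trans (by gcongr)
      _ = 2⁻¹ * ‖x - y‖ := by field_simp
  exact sub_eq_zero.1 (norm_le_zero_iff.1 (by linarith))

theorem transpose_jac_mul_jac (u : E2 → EuclideanSpace ℝ (Fin 4)) (x : E2) :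
    (Jac u x)ᵀ * Jac u x = firstFundamentalForm u x := by
  ext i j
  simp [firstFundamentalForm, gram_apply, Jac, mul_apply, PiLp.inner_apply, partialDeriv, mul_comm]

/-- **Poznyak (1973).** Every smooth Riemannian metric on an open subset of `ℝ²` admits,
near any point, a smooth local isometric embedding into `ℝ⁴`. -/
theorem poznyak (Ω : Set E2) (hΩ : IsOpen Ω) (p : E2) (hp : p ∈ Ω)
    (g : E2 → Matrix (Fin 2) (Fin 2) ℝ)
    (hg_smooth : ContDiffOn ℝ (⊤ : ℕ∞) g Ω)
    (hg_met : ∀ x ∈ Ω, (g x).IsSymm ∧ (g x).PosDef) :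
    ∃ U : Set E2, IsOpen U ∧ p ∈ U ∧ U ⊆ Ω ∧
      ∃ u : E2 → EuclideanSpace ℝ (Fin 4),
        ContDiffOn ℝ (⊤ : ℕ∞) u U ∧ Set.InjOn u U ∧
        ∀ x ∈ U, (Jac u x)ᵀ * Jac u x = g x := by
  have hΩp : ∀ᶠ x in 𝓝 p, x ∈ Ω := hΩ.mem_nhds hp
  obtain ⟨g', hg', hg'g⟩ := exists_contDiff_eventuallyEq
    (hΩp.mono fun x hx => hg_smooth.contDiffAt (hΩ.mem_nhds hx))
  have hsymm : ∀ᶠ x in 𝓝 p, (g' x).IsSymm := by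
    filter_upwards [hΩp, hg'g] with x hx hgx
    exact hgx ▸ (hg_met x hx).1
  have hposDef : (g' p).PosDef := hg'g.eq_of_nhds ▸ (hg_met p hp).2
  obtain ⟨u, hu, hug'⟩ := exists_immersion_firstFundamentalForm_eq hg' hsymm hposDef
  have himmersion : (firstFundamentalForm u p).PosDef := hug'.eq_of_nhds ▸ hposDef
  obtain ⟨s, hs, hinjOn⟩ := exists_mem_nhds_injOn
    (hu.contDiffAt.hasStrictFDerivAt (by simp)) (injective_of_posDef_gram himmersion)
  obtain ⟨U, hU, hUo, hpU⟩ := mem_nhds_iff.1 (inter_mem hs (hΩp.and (hug'.trans hg'g)))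
  exact ⟨U, hUo, hpU, fun x hx => (hU hx).2.1, u, hu.contDiffOn, hinjOn.mono fun x hx => (hU hx).1,
    fun x hx => (transpose_jac_mul_jac u x).trans (hU hx).2.2⟩
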